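/- arXiv:2009.09389 — 3 statements merged into one kernel-verified Lean document; each statement's English description precedes it below -/
import Mathlib

section
/- Let φ : ℝ² ∖ {0} → ℝ be given by φ(x) = (2π)⁻¹ log‖x‖ (the fundamental solution of the two-dimensional Laplace operator). Then for every smooth compactly supported function f : ℝ² → ℝ, the function x ↦ φ(x)·Δf(x) is Lebesgue integrable on ℝ² and ∫_{ℝ²} φ(x) Δf(x) dx = f(0), where Δf denotes the sum of the second partial derivatives of f. -/
open MeasureTheory

/-!
Since `∇ log |x| = x / |x|²`, the product `∇ log |x| · ∇f` equals `|x|⁻² Df(x)(x)`. In polar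
coordinates, multiplied by the Jacobian `r`, this is the radial derivative `∂ᵣ f`, whose integral
over each ray from the origin is `-f 0`. Integrating over the angle gives
`∫ ∇ log |x| · ∇f = -2π f 0`.

It remains to integrate by parts once. Both `log |x|` and `|∇ log |x|| = |x|⁻¹` are locally
integrable on the plane, and every line parallel to an axis, except the axis itself, misses the
singularity. Hence the one-dimensional formula on lines and Fubini's theorem give
`∫ log |x| Δf = -∫ ∇ log |x| · ∇f` without cutting out or regularising the singularity.
-/

open Set

section NormedSpace

variable {E F : Type*} [NormedAddCommGroup E] [NormedSpace ℝ E]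
  [NormedAddCommGroup F] [NormedSpace ℝ F]

theorem contDiff_fderiv_apply_const {m n : WithTop ℕ∞} {f : E → F} (hf : ContDiff ℝ n f)
    (hmn : m + 1 ≤ n) (v : E) : ContDiff ℝ m fun x => fderiv ℝ f x v :=
  (hf.fderiv_right hmn).clm_apply contDiff_const

theorem iteratedDeriv_two_comp_of_hasDerivAt_const {f : E → F} (hf : ContDiff ℝ 2 f)
    {γ : ℝ → E} {v : E} (hγ : ∀ t, HasDerivAt γ v t) (t : ℝ) :
    iteratedDeriv 2 (fun s => f (γ s)) t = fderiv ℝ (fun x => fderiv ℝ f x v) (γ t) v := by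
  have deriv_comp {g : E → F} (hg : Differentiable ℝ g) :
      deriv (fun s => g (γ s)) = fun s => fderiv ℝ g (γ s) v :=
    funext fun s => ((hg (γ s)).hasFDerivAt.comp_hasDerivAt s (hγ s)).deriv
  have hf' := contDiff_fderiv_apply_const hf one_add_one_eq_two.le v
  rw [iteratedDeriv_succ, iteratedDeriv_one, deriv_comp (hf.differentiable two_ne_zero),
    deriv_comp (hf'.differentiable one_ne_zero)]

theorem integral_Ioi_fderiv_smul_apply [CompleteSpace F] {f : E → F} (hf : ContDiff ℝ 1 f)
    (hfc : HasCompactSupport f) {v : E} (hv : v ≠ 0) :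
    ∫ r in Ioi (0 : ℝ), fderiv ℝ f (r • v) v = -f 0 := by
  have hderiv (r : ℝ) : deriv (fun r : ℝ => f (r • v)) r = fderiv ℝ f (r • v) v := by
    simpa [Function.comp_def] using
      ((hf.differentiable one_ne_zero (r • v)).hasFDerivAt.comp_hasDerivAt r
      ((hasDerivAt_id r).smul_const v)).deriv
  have hcomp : ContDiff ℝ 1 fun r : ℝ => f (r • v) :=
    hf.comp (contDiff_id.smul contDiff_const)
  simpa [hderiv] using (hfc.comp_isClosedEmbedding
    (isClosedEmbedding_smul_left (𝕜 := ℝ) hv)).integral_Ioi_deriv_eq hcomp 0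

theorem locallyIntegrable_of_norm_le_mul_inv_norm {F : Type*} [NormedAddCommGroup F]
    [FiniteDimensional ℝ E] [MeasurableSpace E] [BorelSpace E] {μ : Measure E}
    [μ.IsAddHaarMeasure] (hE : 1 < Module.finrank ℝ E) {f : E → F} {C : ℝ}
    (hf : AEStronglyMeasurable f μ) (hle : ∀ᵐ x ∂μ, ‖f x‖ ≤ C * ‖x‖⁻¹) :
    LocallyIntegrable f μ :=
  locallyIntegrable_of_norm_le_rpow (α := 1) hE.le (by exact_mod_cast hE)
    (by simpa only [Real.rpow_neg_one] using hle) hf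

end NormedSpace

section Fubini

variable {X F : Type*} [MeasurableSpace X] {μ : Measure X} [SFinite μ]
  [NormedAddCommGroup F] [NormedSpace ℝ F]

theorem integral_prod_smul_deriv_eq_neg {u u' : X × ℝ → ℝ} {g g' : X × ℝ → F}
    (hu : ∀ᵐ x ∂μ, ∀ t, HasDerivAt (fun s => u (x, s)) (u' (x, t)) t)
    (hg : ∀ᵐ x ∂μ, ∀ t, HasDerivAt (fun s => g (x, s)) (g' (x, t)) t)
    (hug' : Integrable (fun p => u p • g' p) (μ.prod volume))
    (hu'g : Integrable (fun p => u' p • g p) (μ.prod volume))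
    (hug : Integrable (fun p => u p • g p) (μ.prod volume)) :
    ∫ p, u p • g' p ∂μ.prod volume = -∫ p, u' p • g p ∂μ.prod volume := by
  rw [integral_prod _ hug', integral_prod _ hu'g, ← integral_neg]
  refine integral_congr_ae ?_
  filter_upwards [hu, hg, hug'.prod_right_ae, hu'g.prod_right_ae, hug.prod_right_ae]
    with x hux hgx hug'x hu'gx hugx
  exact integral_bilinear_hasDerivAt_right_eq_neg_left_of_integrable
    (L := ContinuousLinearMap.lsmul ℝ ℝ) (fun t _ => hux t) (fun t _ => hgx t) hug'x hu'gx hugx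

end Fubini

section Plane

theorem norm_le_sqrt_sq_add_sq (p : ℝ × ℝ) : ‖p‖ ≤ √(p.1 ^ 2 + p.2 ^ 2) := by
  rw [Prod.norm_def]
  exact max_le (Real.abs_le_sqrt (by linarith [sq_nonneg p.2]))
    (Real.abs_le_sqrt (by linarith [sq_nonneg p.1]))

theorem abs_log_le_inv_add_self {t : ℝ} (ht : 0 ≤ t) : |Real.log t| ≤ t⁻¹ + t := by
  have hinv : 0 ≤ t⁻¹ := inv_nonneg.2 ht
  rw [abs_le]
  constructor <;> linarith [Real.log_le_self ht, Real.log_le_self hinv, Real.log_inv t]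

theorem locallyIntegrable_log_sqrt_sq_add_sq :
    LocallyIntegrable fun p : ℝ × ℝ => Real.log √(p.1 ^ 2 + p.2 ^ 2) := by
  have hinv : LocallyIntegrable fun p : ℝ × ℝ => ‖p‖⁻¹ :=
    locallyIntegrable_of_norm_le_mul_inv_norm (C := 1) (by simp)
      (Measurable.aestronglyMeasurable (by fun_prop)) (.of_forall fun p => by simp)
  have hsqrt : LocallyIntegrable fun p : ℝ × ℝ => √(p.1 ^ 2 + p.2 ^ 2) :=
    Continuous.locallyIntegrable (by fun_prop)
  refine (hinv.add hsqrt).mono (Measurable.aestronglyMeasurable (by fun_prop))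
    (.of_forall fun p => le_trans ?_ (le_abs_self _))
  rcases eq_or_ne p 0 with rfl | hp
  · simp
  refine (abs_log_le_inv_add_self (Real.sqrt_nonneg _)).trans ?_
  exact add_le_add_left (inv_anti₀ (norm_pos_iff.2 hp) (norm_le_sqrt_sq_add_sq p)) _

theorem locallyIntegrable_clm_div_sq_add_sq (ℓ : ℝ × ℝ →L[ℝ] ℝ) :
    LocallyIntegrable fun p : ℝ × ℝ => ℓ p / (p.1 ^ 2 + p.2 ^ 2) := by
  refine locallyIntegrable_of_norm_le_mul_inv_norm (C := ‖ℓ‖) (by simp)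
    (Measurable.aestronglyMeasurable (by fun_prop)) (.of_forall fun p => ?_)
  rcases eq_or_ne p 0 with rfl | hp
  · simp
  have hnorm : 0 < ‖p‖ := norm_pos_iff.2 hp
  have hsq : ‖p‖ ^ 2 ≤ p.1 ^ 2 + p.2 ^ 2 :=
    (Real.le_sqrt' hnorm).1 (norm_le_sqrt_sq_add_sq p)
  calc ‖ℓ p / (p.1 ^ 2 + p.2 ^ 2)‖ = ‖ℓ p‖ / (p.1 ^ 2 + p.2 ^ 2) := by
        rw [norm_div, Real.norm_of_nonneg (by positivity : 0 ≤ p.1 ^ 2 + p.2 ^ 2)]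
    _ ≤ ‖ℓ‖ * ‖p‖ / ‖p‖ ^ 2 :=
        div_le_div₀ (by positivity) (ℓ.le_opNorm p) (by positivity) hsq
    _ = ‖ℓ‖ * ‖p‖⁻¹ := by field_simp

theorem hasDerivAt_log_sqrt_sq_add_sq {x : ℝ} (hx : x ≠ 0) (y : ℝ) :
    HasDerivAt (fun t => Real.log √(x ^ 2 + t ^ 2)) (y / (x ^ 2 + y ^ 2)) y := by
  have hsum : x ^ 2 + y ^ 2 ≠ 0 := by positivity
  have hlog := (((hasDerivAt_pow 2 y).const_add (x ^ 2)).log hsum).div_const 2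
  refine (hlog.congr_deriv (by simp; field_simp)).congr_of_eventuallyEq (.of_forall fun t => ?_)
  exact Real.log_sqrt (by positivity)

variable {F : Type*} [NormedAddCommGroup F] [NormedSpace ℝ F] {f : ℝ × ℝ → F}

theorem integrable_log_sqrt_smul_fderiv (hf : ContDiff ℝ 1 f) (hfc : HasCompactSupport f)
    (v : ℝ × ℝ) :
    Integrable fun p : ℝ × ℝ => Real.log √(p.1 ^ 2 + p.2 ^ 2) • fderiv ℝ f p v :=
  locallyIntegrable_log_sqrt_sq_add_sq.integrable_smul_right_of_hasCompactSupport
    (contDiff_fderiv_apply_const hf (zero_add _).le v).continuous (hfc.fderiv_apply ℝ v)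

theorem integrable_clm_div_sq_add_sq_smul (hf : Continuous f) (hfc : HasCompactSupport f)
    (ℓ : ℝ × ℝ →L[ℝ] ℝ) :
    Integrable fun p : ℝ × ℝ => (ℓ p / (p.1 ^ 2 + p.2 ^ 2)) • f p :=
  (locallyIntegrable_clm_div_sq_add_sq ℓ).integrable_smul_right_of_hasCompactSupport hf hfc

theorem integral_log_sqrt_smul_fderiv_snd (hf : ContDiff ℝ 1 f) (hfc : HasCompactSupport f) :
    ∫ p : ℝ × ℝ, Real.log √(p.1 ^ 2 + p.2 ^ 2) • fderiv ℝ f p (0, 1) =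
      -∫ p : ℝ × ℝ, (p.2 / (p.1 ^ 2 + p.2 ^ 2)) • f p := by
  have hslice (x y : ℝ) : HasDerivAt (fun t => f (x, t)) (fderiv ℝ f (x, y) (0, 1)) y :=
    (hf.differentiable one_ne_zero (x, y)).hasFDerivAt.comp_hasDerivAt y
      ((hasDerivAt_const y x).prodMk (hasDerivAt_id y))
  refine integral_prod_smul_deriv_eq_neg (μ := volume) ?_ (.of_forall hslice)
    (integrable_log_sqrt_smul_fderiv hf hfc _)
    (integrable_clm_div_sq_add_sq_smul hf.continuous hfc (.snd ℝ ℝ ℝ))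
    (locallyIntegrable_log_sqrt_sq_add_sq.integrable_smul_right_of_hasCompactSupport
      hf.continuous hfc)
  filter_upwards [Measure.ae_ne volume (0 : ℝ)] with x hx using hasDerivAt_log_sqrt_sq_add_sq hx

theorem integral_log_sqrt_smul_fderiv_fst (hf : ContDiff ℝ 1 f) (hfc : HasCompactSupport f) :
    ∫ p : ℝ × ℝ, Real.log √(p.1 ^ 2 + p.2 ^ 2) • fderiv ℝ f p (1, 0) =
      -∫ p : ℝ × ℝ, (p.1 / (p.1 ^ 2 + p.2 ^ 2)) • f p := by
  let σ := ContinuousLinearEquiv.prodComm ℝ ℝ ℝ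
  have hswap := integral_log_sqrt_smul_fderiv_snd (f := f ∘ σ) (hf.comp σ.contDiff)
    (hfc.comp_homeomorph σ.toHomeomorph)
  simp only [σ.comp_right_fderiv, ContinuousLinearMap.comp_apply] at hswap
  rw [Measure.volume_eq_prod, ← integral_prod_swap, ← integral_prod_swap (f := fun p => _ • f p)]
  simpa [σ, add_comm, ← Measure.volume_eq_prod] using hswap

theorem div_smul_clm_apply_add_div_smul_clm_apply (L : ℝ × ℝ →L[ℝ] F) (p : ℝ × ℝ) (c : ℝ) :
    (p.1 / c) • L (1, 0) + (p.2 / c) • L (0, 1) = c⁻¹ • L p := by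
  rw [← map_smul, ← map_smul, ← map_smul, ← map_add]
  congr 1
  ext <;> simp [div_eq_inv_mul]

theorem integrable_inv_sq_add_sq_smul_fderiv_apply_self (hf : ContDiff ℝ 1 f)
    (hfc : HasCompactSupport f) :
    Integrable fun p : ℝ × ℝ => (p.1 ^ 2 + p.2 ^ 2)⁻¹ • fderiv ℝ f p p := by
  have hcont (v : ℝ × ℝ) := (contDiff_fderiv_apply_const hf (zero_add _).le v).continuous
  simp_rw [← div_smul_clm_apply_add_div_smul_clm_apply]
  exact (integrable_clm_div_sq_add_sq_smul (hcont _) (hfc.fderiv_apply ℝ _) (.fst ℝ ℝ ℝ)).add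
    (integrable_clm_div_sq_add_sq_smul (hcont _) (hfc.fderiv_apply ℝ _) (.snd ℝ ℝ ℝ))

theorem integrableOn_comp_polarCoord_symm {g : ℝ × ℝ → F} (hg : Integrable g) :
    IntegrableOn (fun p => p.1 • g (polarCoord.symm p)) polarCoord.target := by
  have hjac := (integrableOn_image_iff_integrableOn_abs_det_fderiv_smul volume
    polarCoord.open_target.measurableSet
    (fun p _ => (hasFDerivAt_polarCoord_symm p).hasFDerivWithinAt) polarCoord.symm.injOn g).1
    hg.integrableOn
  refine hjac.congr_fun (fun p hp => ?_) polarCoord.open_target.measurableSet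
  have hr : 0 < p.1 := hp.1
  simp only [det_fderivPolarCoordSymm, abs_of_pos hr]

theorem smul_inv_sq_add_sq_smul_clm_apply_polarCoord_symm (L : ℝ × ℝ →L[ℝ] F) {r : ℝ}
    (hr : r ≠ 0) (θ : ℝ) :
    r • ((r * Real.cos θ) ^ 2 + (r * Real.sin θ) ^ 2)⁻¹ • L (r * Real.cos θ, r * Real.sin θ) =
      L (Real.cos θ, Real.sin θ) := by
  have hsq : (r * Real.cos θ) ^ 2 + (r * Real.sin θ) ^ 2 = r ^ 2 := by
    linear_combination r ^ 2 * Real.sin_sq_add_cos_sq θ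
  have hpolar : (r * Real.cos θ, r * Real.sin θ) = r • (Real.cos θ, Real.sin θ) := rfl
  have hcancel : r * (r ^ 2)⁻¹ * r = 1 := by field_simp
  rw [hsq, hpolar, map_smul, smul_smul, smul_smul, hcancel, one_smul]

theorem integral_inv_sq_add_sq_smul_fderiv_apply_self [CompleteSpace F]
    (hf : ContDiff ℝ 1 f) (hfc : HasCompactSupport f) :
    ∫ p : ℝ × ℝ, (p.1 ^ 2 + p.2 ^ 2)⁻¹ • fderiv ℝ f p p = -((2 * Real.pi) • f 0) := by
  let e (θ : ℝ) : ℝ × ℝ := (Real.cos θ, Real.sin θ)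
  have he (θ : ℝ) : e θ ≠ 0 := fun h => by
    simpa [(Prod.mk.inj h).1, (Prod.mk.inj h).2] using Real.sin_sq_add_cos_sq θ
  have htarget := polarCoord.open_target.measurableSet
  have hradial : EqOn
      (fun p => p.1 • (fun q : ℝ × ℝ => (q.1 ^ 2 + q.2 ^ 2)⁻¹ • fderiv ℝ f q q)
        (polarCoord.symm p))
      (fun p => fderiv ℝ f (p.1 • e p.2) (e p.2)) polarCoord.target := fun p hp =>
    smul_inv_sq_add_sq_smul_clm_apply_polarCoord_symm _ (ne_of_gt hp.1) p.2
  have hint := (integrableOn_comp_polarCoord_symm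
    (integrable_inv_sq_add_sq_smul_fderiv_apply_self hf hfc)).congr_fun hradial htarget
  calc ∫ p : ℝ × ℝ, (p.1 ^ 2 + p.2 ^ 2)⁻¹ • fderiv ℝ f p p
      = ∫ p in Ioi (0 : ℝ) ×ˢ Ioo (-Real.pi) Real.pi, fderiv ℝ f (p.1 • e p.2) (e p.2) := by
        rw [← integral_comp_polarCoord_symm, setIntegral_congr_fun htarget hradial,
          polarCoord_target]
    _ = ∫ θ in Ioo (-Real.pi) Real.pi, ∫ r in Ioi (0 : ℝ), fderiv ℝ f (r • e θ) (e θ) := by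
        rw [Measure.volume_eq_prod, ← setIntegral_prod_swap]
        exact setIntegral_prod _ hint.swap
    _ = ∫ _θ in Ioo (-Real.pi) Real.pi, -f 0 := by
        simp only [integral_Ioi_fderiv_smul_apply hf hfc (he _)]
    _ = -((2 * Real.pi) • f 0) := by
        simp [← two_mul, Real.pi_pos.le]

/-- The coordinate Laplacian of a function on `ℝ × ℝ`. Mathlib's `InnerProductSpace.laplacian`
does not apply here, since `ℝ × ℝ` carries the sup norm. -/
noncomputable def planeLaplacian (f : ℝ × ℝ → F) (p : ℝ × ℝ) : F :=
  iteratedDeriv 2 (fun x => f (x, p.2)) p.1 + iteratedDeriv 2 (fun y => f (p.1, y)) p.2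

theorem planeLaplacian_eq_fderiv_fderiv (hf : ContDiff ℝ 2 f) :
    planeLaplacian f = fun p => fderiv ℝ (fun q => fderiv ℝ f q (1, 0)) p (1, 0) +
      fderiv ℝ (fun q => fderiv ℝ f q (0, 1)) p (0, 1) :=
  funext fun p => congrArg₂ (· + ·)
    (iteratedDeriv_two_comp_of_hasDerivAt_const hf
      (fun t => (hasDerivAt_id t).prodMk (hasDerivAt_const t p.2)) p.1)
    (iteratedDeriv_two_comp_of_hasDerivAt_const hf
      (fun t => (hasDerivAt_const t p.1).prodMk (hasDerivAt_id t)) p.2)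

theorem integrable_log_sqrt_smul_planeLaplacian (hf : ContDiff ℝ 2 f)
    (hfc : HasCompactSupport f) :
    Integrable fun p : ℝ × ℝ => Real.log √(p.1 ^ 2 + p.2 ^ 2) • planeLaplacian f p := by
  have hpartial (v : ℝ × ℝ) := integrable_log_sqrt_smul_fderiv
    (contDiff_fderiv_apply_const hf one_add_one_eq_two.le v) (hfc.fderiv_apply ℝ v) v
  simp_rw [planeLaplacian_eq_fderiv_fderiv hf, smul_add]
  exact (hpartial _).add (hpartial _)

theorem integral_log_sqrt_smul_planeLaplacian [CompleteSpace F] (hf : ContDiff ℝ 2 f)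
    (hfc : HasCompactSupport f) :
    ∫ p : ℝ × ℝ, Real.log √(p.1 ^ 2 + p.2 ^ 2) • planeLaplacian f p = (2 * Real.pi) • f 0 := by
  let d (v p : ℝ × ℝ) : F := fderiv ℝ f p v
  have hd (v : ℝ × ℝ) : ContDiff ℝ 1 (d v) :=
    contDiff_fderiv_apply_const hf one_add_one_eq_two.le v
  have hdc (v : ℝ × ℝ) : HasCompactSupport (d v) := hfc.fderiv_apply ℝ v
  calc ∫ p : ℝ × ℝ, Real.log √(p.1 ^ 2 + p.2 ^ 2) • planeLaplacian f p
      = (∫ p : ℝ × ℝ, Real.log √(p.1 ^ 2 + p.2 ^ 2) • fderiv ℝ (d (1, 0)) p (1, 0)) +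
          ∫ p : ℝ × ℝ, Real.log √(p.1 ^ 2 + p.2 ^ 2) • fderiv ℝ (d (0, 1)) p (0, 1) := by
        simp_rw [planeLaplacian_eq_fderiv_fderiv hf, smul_add]
        exact integral_add (integrable_log_sqrt_smul_fderiv (hd _) (hdc _) _)
          (integrable_log_sqrt_smul_fderiv (hd _) (hdc _) _)
    _ = -∫ p : ℝ × ℝ, (p.1 / (p.1 ^ 2 + p.2 ^ 2)) • d (1, 0) p +
          (p.2 / (p.1 ^ 2 + p.2 ^ 2)) • d (0, 1) p := by
        rw [integral_log_sqrt_smul_fderiv_fst (hd _) (hdc _),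
          integral_log_sqrt_smul_fderiv_snd (hd _) (hdc _), ← neg_add]
        exact congrArg _ (integral_add
          (integrable_clm_div_sq_add_sq_smul (hd _).continuous (hdc _) (.fst ℝ ℝ ℝ))
          (integrable_clm_div_sq_add_sq_smul (hd _).continuous (hdc _) (.snd ℝ ℝ ℝ))).symm
    _ = -∫ p : ℝ × ℝ, (p.1 ^ 2 + p.2 ^ 2)⁻¹ • fderiv ℝ f p p := by
        simp only [d, div_smul_clm_apply_add_div_smul_clm_apply]
    _ = (2 * Real.pi) • f 0 := by
        rw [integral_inv_sq_add_sq_smul_fderiv_apply_self (hf.of_le one_le_two) hfc, neg_neg]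

end Plane

theorem stmt_5_general {F : Type*} [NormedAddCommGroup F] [NormedSpace ℝ F] [CompleteSpace F]
    (f : ℝ × ℝ → F) (hf : ContDiff ℝ 2 f) (hsupp : HasCompactSupport f)
    (phi : ℝ × ℝ → ℝ)
    (hphi : ∀ p : ℝ × ℝ, p ≠ 0 →
      phi p = (2 * Real.pi)⁻¹ * Real.log (Real.sqrt (p.1 ^ 2 + p.2 ^ 2)))
    (lapf : ℝ × ℝ → F)
    (hlapf : ∀ p : ℝ × ℝ, lapf p = iteratedDeriv 2 (fun x => f (x, p.2)) p.1 +
      iteratedDeriv 2 (fun y => f (p.1, y)) p.2) :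
    Integrable (fun p : ℝ × ℝ => phi p • lapf p) ∧
    (∫ p : ℝ × ℝ, phi p • lapf p) = f 0 := by
  obtain rfl : lapf = planeLaplacian f := funext hlapf
  have hae : (fun p => (2 * Real.pi)⁻¹ • Real.log √(p.1 ^ 2 + p.2 ^ 2) • planeLaplacian f p)
      =ᵐ[volume] fun p => phi p • planeLaplacian f p := by
    filter_upwards [Measure.ae_ne volume (0 : ℝ × ℝ)] with p hp
    rw [hphi p hp, mul_smul]
  refine ⟨((integrable_log_sqrt_smul_planeLaplacian hf hsupp).smul _).congr hae, ?_⟩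
  rw [← integral_congr_ae hae, integral_smul, integral_log_sqrt_smul_planeLaplacian hf hsupp,
    inv_smul_smul₀ (by positivity)]

/-- The fundamental solution `φ(x) = (2π)⁻¹ log‖x‖` of the 2D Laplacian satisfies
`∫ φ Δf = f(0)` for every smooth compactly supported `f`. -/
theorem stmt_5 (f : ℝ × ℝ → ℝ) (hf : ContDiff ℝ (⊤ : ℕ∞) f) (hsupp : HasCompactSupport f)
    (phi : ℝ × ℝ → ℝ)
    (hphi : ∀ p : ℝ × ℝ, p ≠ 0 →
      phi p = (2 * Real.pi)⁻¹ * Real.log (Real.sqrt (p.1 ^ 2 + p.2 ^ 2)))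
    (lapf : ℝ × ℝ → ℝ)
    (hlapf : ∀ p : ℝ × ℝ, lapf p = iteratedDeriv 2 (fun x => f (x, p.2)) p.1 +
      iteratedDeriv 2 (fun y => f (p.1, y)) p.2) :
    Integrable (fun p : ℝ × ℝ => phi p * lapf p) ∧
    (∫ p : ℝ × ℝ, phi p * lapf p) = f 0 :=
  stmt_5_general f (hf.of_le (WithTop.coe_le_coe.2 le_top)) hsupp phi hphi lapf hlapf
end

section
/- Let g : ℝ² → ℝ be smooth with compact support. Define Φ(x) = (2π)⁻¹ ∫_{ℝ²} log‖x − y‖ g(y) dy. Then for every x the integrand is Lebesgue integrable, Φ is twice continuously differentiable on ℝ², and ΔΦ(x) = g(x) for all x ∈ ℝ², where ΔΦ denotes the sum of the second partial derivatives of Φ. -/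
open MeasureTheory

/-!
Write `K z = log |z|`, so that `Φ = (2π)⁻¹ (K ⋆ g)`. The gradient `∇K z = z / |z|²` is locally
integrable and is the weak gradient of `K`, as one sees by letting `ε → 0` in
`K_ε z = log √(|z|² + ε)`. One derivative of `K ⋆ g` can therefore be put on the kernel and the
other on `g`, so that `g ∈ C¹` is enough for `K ⋆ g ∈ C²`, and
`Δ(K ⋆ g)(p) = ∫ ∇K(t) · ∇g(p - t) dt`. With `h t = g (p - t)` this is `-∫ (t · ∇h(t)) / |t|² dt`.
In polar coordinates the Jacobian `r` cancels the singularity and `∂h/∂r` remains, whose integral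
over each ray is `-h(0)`; integrating over the angle gives `2π h(0) = 2π g(p)`.
-/

namespace LogPotential

open Filter Topology
open scoped Convolution

lemma locallyIntegrable_of_tendsto {X F : Type*} [TopologicalSpace X] [MeasurableSpace X]
    [NormedAddCommGroup F] {μ : Measure X} {u : ℕ → X → F} {f : X → F} {B : X → ℝ}
    (hu : ∀ n, AEStronglyMeasurable (u n) μ) (hB : LocallyIntegrable B μ)
    (huB : ∀ n, ∀ᵐ x ∂μ, ‖u n x‖ ≤ B x)
    (hlim : ∀ᵐ x ∂μ, Tendsto (fun n ↦ u n x) atTop (𝓝 (f x))) : LocallyIntegrable f μ := by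
  refine hB.mono (aestronglyMeasurable_of_tendsto_ae atTop hu hlim) ?_
  filter_upwards [ae_all_iff.2 huB, hlim] with x hx hxlim
  exact le_of_tendsto hxlim.norm (.of_forall fun n ↦ (hx n).trans (le_abs_self _))

lemma locallyIntegrable_inv_norm {E : Type*} [NormedAddCommGroup E] [NormedSpace ℝ E]
    [FiniteDimensional ℝ E] [MeasurableSpace E] [BorelSpace E] {μ : Measure E}
    [μ.IsAddHaarMeasure] (hE : 1 < Module.finrank ℝ E) :
    LocallyIntegrable (fun x : E ↦ ‖x‖⁻¹) μ := by
  refine locallyIntegrable_of_norm_le_rpow hE.le (C := 1) (α := 1) (mod_cast hE)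
    (.of_forall fun x ↦ ?_) (by fun_prop)
  simp [Real.rpow_neg_one]

section WeakDerivative

variable {E : Type*} [NormedAddCommGroup E] [NormedSpace ℝ E] [MeasurableSpace E]

/-- `f'` is the weak (distributional) Fréchet derivative of `f`: both are locally integrable, and
integration by parts holds against every compactly supported `C¹` test function. -/
structure HasWeakFDeriv (f : E → ℝ) (f' : E → E →L[ℝ] ℝ) (μ : Measure E) : Prop where
  locallyIntegrable : LocallyIntegrable f μ
  locallyIntegrable_deriv : LocallyIntegrable f' μ
  integral_mul_fderiv : ∀ φ : E → ℝ, ContDiff ℝ 1 φ → HasCompactSupport φ → ∀ v : E,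
    ∫ x, f x * fderiv ℝ φ x v ∂μ = -∫ x, f' x v * φ x ∂μ

variable [BorelSpace E] {μ : Measure E} {f : E → ℝ} {f' : E → E →L[ℝ] ℝ}

lemma hasWeakFDeriv_fderiv [FiniteDimensional ℝ E] [μ.IsAddHaarMeasure] (hf : ContDiff ℝ 1 f) :
    HasWeakFDeriv f (fderiv ℝ f) μ where
  locallyIntegrable := hf.continuous.locallyIntegrable
  locallyIntegrable_deriv := (hf.continuous_fderiv one_ne_zero).locallyIntegrable
  integral_mul_fderiv φ hφ hφs v := by
    have hf' := hf.continuous_fderiv one_ne_zero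
    have hφ' := hφ.continuous_fderiv one_ne_zero
    refine integral_mul_fderiv_eq_neg_fderiv_mul_of_integrable ?_ ?_ ?_
      (fun x _ ↦ hf.differentiable one_ne_zero x) (fun x _ ↦ hφ.differentiable one_ne_zero x)
    · exact ((hf'.clm_apply continuous_const).mul hφ.continuous).integrable_of_hasCompactSupport
        hφs.mul_left
    · exact (hf.continuous.mul (hφ'.clm_apply continuous_const)).integrable_of_hasCompactSupport
        (hφs.fderiv_apply ℝ v).mul_left
    · exact (hf.continuous.mul hφ.continuous).integrable_of_hasCompactSupport hφs.mul_left

theorem HasWeakFDeriv.of_dominated [SecondCountableTopology E]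
    {u : ℕ → E → ℝ} {u' : ℕ → E → E →L[ℝ] ℝ} {B B' : E → ℝ}
    (hu : ∀ n, HasWeakFDeriv (u n) (u' n) μ)
    (hB : LocallyIntegrable B μ) (huB : ∀ n, ∀ᵐ x ∂μ, ‖u n x‖ ≤ B x)
    (hB' : LocallyIntegrable B' μ) (huB' : ∀ n, ∀ᵐ x ∂μ, ‖u' n x‖ ≤ B' x)
    (hlim : ∀ᵐ x ∂μ, Tendsto (fun n ↦ u n x) atTop (𝓝 (f x)))
    (hlim' : ∀ᵐ x ∂μ, Tendsto (fun n ↦ u' n x) atTop (𝓝 (f' x))) : HasWeakFDeriv f f' μ where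
  locallyIntegrable :=
    locallyIntegrable_of_tendsto (fun n ↦ (hu n).locallyIntegrable.aestronglyMeasurable) hB huB hlim
  locallyIntegrable_deriv := locallyIntegrable_of_tendsto
    (fun n ↦ (hu n).locallyIntegrable_deriv.aestronglyMeasurable) hB' huB' hlim'
  integral_mul_fderiv φ hφ hφs v := by
    have hφ' : Continuous fun x ↦ fderiv ℝ φ x v :=
      (hφ.continuous_fderiv one_ne_zero).clm_apply continuous_const
    have hleft : Tendsto (fun n ↦ ∫ x, u n x * fderiv ℝ φ x v ∂μ) atTop
        (𝓝 (∫ x, f x * fderiv ℝ φ x v ∂μ)) := by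
      refine tendsto_integral_of_dominated_convergence (fun x ↦ B x * ‖fderiv ℝ φ x v‖)
        (fun n ↦ (hu n).locallyIntegrable.aestronglyMeasurable.mul hφ'.aestronglyMeasurable)
        (hB.integrable_smul_right_of_hasCompactSupport hφ'.norm (hφs.fderiv_apply ℝ v).norm)
        (fun n ↦ ?_) ?_
      · filter_upwards [huB n] with x hx
        rw [norm_mul]
        gcongr
      · filter_upwards [hlim] with x hx using hx.mul_const _
    have hright : Tendsto (fun n ↦ ∫ x, u' n x v * φ x ∂μ) atTop (𝓝 (∫ x, f' x v * φ x ∂μ)) := by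
      refine tendsto_integral_of_dominated_convergence (fun x ↦ B' x * (‖v‖ * ‖φ x‖))
        (fun n ↦ ((hu n).locallyIntegrable_deriv.aestronglyMeasurable.apply_continuousLinearMap
          v).mul hφ.continuous.aestronglyMeasurable)
        (hB'.integrable_smul_right_of_hasCompactSupport (hφ.continuous.norm.const_mul _)
          hφs.norm.mul_left)
        (fun n ↦ ?_) ?_
      · filter_upwards [huB' n] with x hx
        rw [norm_mul, ← mul_assoc]
        gcongr
        exact (u' n x).le_of_opNorm_le hx v
      · filter_upwards [hlim'] with x hx using
          (((ContinuousLinearMap.apply ℝ ℝ v).continuous.tendsto _).comp hx).mul_const _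
    exact tendsto_nhds_unique hleft
      (hright.neg.congr fun n ↦ ((hu n).integral_mul_fderiv φ hφ hφs v).symm)

end WeakDerivative

section Calculus

variable {E F : Type*} [NormedAddCommGroup E] [NormedSpace ℝ E] [NormedAddCommGroup F]
  [NormedSpace ℝ F]

lemma fderiv_comp_const_sub {g : E → F} (hg : Differentiable ℝ g) (a x : E) :
    fderiv ℝ (fun y ↦ g (a - y)) x = -fderiv ℝ g (a - x) := by
  have h := ((hg (a - x)).hasFDerivAt.comp x ((hasFDerivAt_id x).const_sub a)).fderiv
  simpa [Function.comp_def] using h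

lemma iteratedDeriv_two_comp_line {f : E → F} (hf : ContDiff ℝ 2 f) {γ : ℝ → E} {v : E}
    (hγ : ∀ t, HasDerivAt γ v t) (t : ℝ) :
    iteratedDeriv 2 (fun s ↦ f (γ s)) t = fderiv ℝ (fderiv ℝ f) (γ t) v v := by
  have hf' : Differentiable ℝ (fderiv ℝ f) :=
    (hf.fderiv_right (m := 1) (by norm_num)).differentiable one_ne_zero
  have hfirst : deriv (fun s ↦ f (γ s)) = fun s ↦ fderiv ℝ f (γ s) v := funext fun s ↦
    ((hf.differentiable two_ne_zero _).hasFDerivAt.comp_hasDerivAt s (hγ s)).deriv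
  rw [iteratedDeriv_succ, iteratedDeriv_one, hfirst]
  simpa using (((hf' _).hasFDerivAt.comp_hasDerivAt t (hγ t)).clm_apply
    (hasDerivAt_const t v)).deriv

end Calculus

section Convolution

variable {E : Type*} [NormedAddCommGroup E] [NormedSpace ℝ E] [MeasurableSpace E] [BorelSpace E]
  {μ : Measure E} {f g : E → ℝ} {f' : E → E →L[ℝ] ℝ}

lemma integrable_apply_mul_comp_const_sub (hf' : LocallyIntegrable f' μ) (hg : Continuous g)
    (hgs : HasCompactSupport g) (x v : E) : Integrable (fun t ↦ f' t v * g (x - t)) μ := by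
  simpa [mul_comm] using (hgs.convolutionExists_right (ContinuousLinearMap.lsmul ℝ ℝ).flip hf' hg
    x).apply_continuousLinearMap v

lemma convolution_flip_lsmul_apply (hf' : LocallyIntegrable f' μ) (hg : Continuous g)
    (hgs : HasCompactSupport g) (x v : E) :
    (f' ⋆[(ContinuousLinearMap.lsmul ℝ ℝ).flip, μ] g) x v = ∫ t, f' t v * g (x - t) ∂μ := by
  rw [convolution_def, ContinuousLinearMap.integral_apply
    (hgs.convolutionExists_right (ContinuousLinearMap.lsmul ℝ ℝ).flip hf' hg x)]
  simp [mul_comm]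

variable [SFinite μ] [μ.IsAddLeftInvariant]

lemma fderiv_convolution_apply {F F' G : Type*} [NormedAddCommGroup F] [NormedSpace ℝ F]
    [NormedAddCommGroup F'] [NormedSpace ℝ F'] [NormedAddCommGroup G] [NormedSpace ℝ G]
    {f : E → F} {g : E → F'} (hf : LocallyIntegrable f μ) (hg : ContDiff ℝ 1 g)
    (hgs : HasCompactSupport g) (L : F →L[ℝ] F' →L[ℝ] G) (x v : E) :
    fderiv ℝ (f ⋆[L, μ] g) x v = ∫ t, L (f t) (fderiv ℝ g (x - t) v) ∂μ := by
  rw [(hgs.hasFDerivAt_convolution_right L hf hg x).fderiv]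
  exact convolution_precompR_apply L hf (hgs.fderiv ℝ) (hg.continuous_fderiv one_ne_zero) x v

namespace HasWeakFDeriv

theorem fderiv_convolution (hf : HasWeakFDeriv f f' μ) (hg : ContDiff ℝ 1 g)
    (hgs : HasCompactSupport g) :
    fderiv ℝ (f ⋆[ContinuousLinearMap.mul ℝ ℝ, μ] g) =
      f' ⋆[(ContinuousLinearMap.lsmul ℝ ℝ).flip, μ] g := by
  ext x v
  have hparts := hf.integral_mul_fderiv (fun t ↦ g (x - t))
    (hg.comp (contDiff_const.sub contDiff_id)) (hgs.comp_homeomorph (Homeomorph.subLeft x)) v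
  simp only [fderiv_comp_const_sub (hg.differentiable one_ne_zero), neg_apply,
    mul_neg, integral_neg, neg_inj] at hparts
  rw [fderiv_convolution_apply hf.locallyIntegrable hg hgs,
    convolution_flip_lsmul_apply hf.locallyIntegrable_deriv hg.continuous hgs, ← hparts]
  rfl

theorem contDiff_succ_convolution (hf : HasWeakFDeriv f f' μ) {n : ℕ∞} (hn : 1 ≤ n)
    (hg : ContDiff ℝ n g) (hgs : HasCompactSupport g) :
    ContDiff ℝ (n + 1) (f ⋆[ContinuousLinearMap.mul ℝ ℝ, μ] g) := by
  have hg' : ContDiff ℝ 1 g := hg.of_le (mod_cast hn)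
  rw [contDiff_succ_iff_fderiv, hf.fderiv_convolution hg' hgs]
  exact ⟨fun x ↦ (hgs.hasFDerivAt_convolution_right _ hf.locallyIntegrable hg' x).differentiableAt,
    by simp, hgs.contDiff_convolution_right _ hf.locallyIntegrable_deriv hg⟩

theorem fderiv_fderiv_convolution_apply (hf : HasWeakFDeriv f f' μ) (hg : ContDiff ℝ 1 g)
    (hgs : HasCompactSupport g) (x v w : E) :
    fderiv ℝ (fderiv ℝ (f ⋆[ContinuousLinearMap.mul ℝ ℝ, μ] g)) x v w =
      ∫ t, f' t w * fderiv ℝ g (x - t) v ∂μ := by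
  have hv : HasCompactSupport fun y ↦ fderiv ℝ g y v := hgs.fderiv_apply ℝ v
  rw [hf.fderiv_convolution hg hgs, fderiv_convolution_apply hf.locallyIntegrable_deriv hg hgs]
  exact convolution_flip_lsmul_apply hf.locallyIntegrable_deriv
    ((hg.continuous_fderiv one_ne_zero).clm_apply continuous_const) hv x w

end HasWeakFDeriv

end Convolution

section LogKernel

/-- The regularised logarithmic kernel `log √(|z|² + ε)` on the plane, which for `ε = 0` is
`log |z|`. The Euclidean norm is written out because `‖z‖` is the sup norm on `ℝ × ℝ`. -/
noncomputable def logKernel (ε : ℝ) (z : ℝ × ℝ) : ℝ := Real.log √(z.1 ^ 2 + z.2 ^ 2 + ε)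

/-- The gradient `z / (|z|² + ε)` of `logKernel ε`, as a continuous linear form. For `ε = 0` its
value at the origin is `0`. -/
noncomputable def logKernelFDeriv (ε : ℝ) (z : ℝ × ℝ) : ℝ × ℝ →L[ℝ] ℝ :=
  (z.1 ^ 2 + z.2 ^ 2 + ε)⁻¹ •
    (z.1 • ContinuousLinearMap.fst ℝ ℝ ℝ + z.2 • ContinuousLinearMap.snd ℝ ℝ ℝ)

lemma logKernelFDeriv_apply (ε : ℝ) (z v : ℝ × ℝ) :
    logKernelFDeriv ε z v = (z.1 ^ 2 + z.2 ^ 2 + ε)⁻¹ * (z.1 * v.1 + z.2 * v.2) := rfl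

lemma logKernel_eq_half_log {ε : ℝ} (hε : 0 ≤ ε) (z : ℝ × ℝ) :
    logKernel ε z = Real.log (z.1 ^ 2 + z.2 ^ 2 + ε) / 2 :=
  Real.log_sqrt (by positivity)

lemma sq_norm_le_sq_add_sq (z : ℝ × ℝ) : ‖z‖ ^ 2 ≤ z.1 ^ 2 + z.2 ^ 2 := by
  rw [Prod.norm_def]
  rcases max_choice ‖z.1‖ ‖z.2‖ with h | h <;> rw [h, Real.norm_eq_abs, sq_abs]
  · exact le_add_of_nonneg_right (sq_nonneg _)
  · exact le_add_of_nonneg_left (sq_nonneg _)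

lemma sq_add_sq_pos {z : ℝ × ℝ} (hz : z ≠ 0) : 0 < z.1 ^ 2 + z.2 ^ 2 :=
  (pow_pos (norm_pos_iff.2 hz) 2).trans_le (sq_norm_le_sq_add_sq z)

lemma sq_add_sq_le_two_mul_sq_norm (z : ℝ × ℝ) : z.1 ^ 2 + z.2 ^ 2 ≤ 2 * ‖z‖ ^ 2 := by
  rw [two_mul]
  exact add_le_add (sq_le_sq.2 ((norm_fst_le z).trans (le_abs_self _)))
    (sq_le_sq.2 ((norm_snd_le z).trans (le_abs_self _)))

lemma norm_logKernel_le {ε : ℝ} (hε : 0 ≤ ε) (hε' : ε ≤ 1) {z : ℝ × ℝ} (hz : z ≠ 0) :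
    ‖logKernel ε z‖ ≤ ‖z‖⁻¹ + ‖z‖ ^ 2 := by
  have hpos : 0 < ‖z‖ := norm_pos_iff.2 hz
  have hlower := Real.log_le_log (by positivity) ((sq_norm_le_sq_add_sq z).trans
    (le_add_of_nonneg_right hε))
  have hupper := Real.log_le_sub_one_of_pos
    ((sq_add_sq_pos hz).trans_le (le_add_of_nonneg_right hε))
  rw [Real.log_pow, Nat.cast_ofNat] at hlower
  rw [logKernel_eq_half_log hε, Real.norm_eq_abs, abs_le]
  constructor
  · linarith [Real.one_sub_inv_le_log_of_pos hpos, sq_nonneg ‖z‖]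
  · linarith [sq_add_sq_le_two_mul_sq_norm z, inv_pos.2 hpos]

lemma norm_logKernelFDeriv_le {ε : ℝ} (hε : 0 ≤ ε) (z : ℝ × ℝ) :
    ‖logKernelFDeriv ε z‖ ≤ 2 * ‖z‖⁻¹ := by
  rcases eq_or_ne z 0 with rfl | hz
  · simp [logKernelFDeriv]
  have : 0 < ‖z‖ := norm_pos_iff.2 hz
  have hnum : ‖z.1 • ContinuousLinearMap.fst ℝ ℝ ℝ + z.2 • ContinuousLinearMap.snd ℝ ℝ ℝ‖ ≤
      2 * ‖z‖ := by
    refine ContinuousLinearMap.opNorm_le_bound _ (by positivity) fun v ↦ ?_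
    calc ‖z.1 * v.1 + z.2 * v.2‖ ≤ ‖z.1‖ * ‖v.1‖ + ‖z.2‖ * ‖v.2‖ := by
          simpa only [norm_mul] using norm_add_le (z.1 * v.1) (z.2 * v.2)
      _ ≤ ‖z‖ * ‖v‖ + ‖z‖ * ‖v‖ := by gcongr <;> first | exact norm_fst_le _ | exact norm_snd_le _
      _ = 2 * ‖z‖ * ‖v‖ := by ring
  have hden : (z.1 ^ 2 + z.2 ^ 2 + ε)⁻¹ ≤ (‖z‖ ^ 2)⁻¹ :=
    inv_anti₀ (by positivity) ((sq_norm_le_sq_add_sq z).trans (le_add_of_nonneg_right hε))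
  calc ‖logKernelFDeriv ε z‖ ≤ (‖z‖ ^ 2)⁻¹ * (2 * ‖z‖) := by
        rw [logKernelFDeriv, norm_smul, Real.norm_of_nonneg (by positivity)]
        gcongr
    _ = 2 * ‖z‖⁻¹ := by field_simp

lemma contDiff_logKernel {ε : ℝ} (hε : 0 < ε) {n : WithTop ℕ∞} : ContDiff ℝ n (logKernel ε) := by
  simp only [funext (logKernel_eq_half_log hε.le)]
  exact (ContDiff.log (by fun_prop) fun z ↦ by positivity).div_const 2

lemma hasFDerivAt_logKernel {ε : ℝ} (hε : 0 < ε) (z : ℝ × ℝ) :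
    HasFDerivAt (logKernel ε) (logKernelFDeriv ε z) z := by
  simp only [funext (logKernel_eq_half_log hε.le)]
  have hpos : z.1 ^ 2 + z.2 ^ 2 + ε ≠ 0 := by positivity
  have h := ((((hasFDerivAt_fst (𝕜 := ℝ) (p := z)).pow 2).add
    ((hasFDerivAt_snd (𝕜 := ℝ) (p := z)).pow 2)).add_const ε |>.log hpos).mul_const 2⁻¹
  refine h.congr_fderiv (ContinuousLinearMap.ext fun v ↦ ?_)
  simp only [Pi.add_apply, Nat.add_one_sub_one, pow_one, nsmul_eq_mul, Nat.cast_ofNat, smul_add,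
    add_apply, smul_apply, ContinuousLinearMap.coe_fst', ContinuousLinearMap.coe_snd', smul_eq_mul,
    logKernelFDeriv_apply]
  ring

theorem hasWeakFDeriv_logKernel :
    HasWeakFDeriv (logKernel 0) (logKernelFDeriv 0) (volume : Measure (ℝ × ℝ)) := by
  have hinv : LocallyIntegrable (fun z : ℝ × ℝ ↦ ‖z‖⁻¹) := locallyIntegrable_inv_norm (by simp)
  have hne : ∀ᵐ z : ℝ × ℝ, z ≠ 0 := Measure.ae_ne volume 0
  have hε (n : ℕ) : 0 < 1 / ((n : ℝ) + 1) := Nat.one_div_pos_of_nat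
  have hlim (z : ℝ × ℝ) : Tendsto (fun n : ℕ ↦ z.1 ^ 2 + z.2 ^ 2 + 1 / ((n : ℝ) + 1)) atTop
      (𝓝 (z.1 ^ 2 + z.2 ^ 2 + 0)) := tendsto_one_div_add_atTop_nhds_zero_nat.const_add _
  have hpos {z : ℝ × ℝ} (hz : z ≠ 0) : 0 < z.1 ^ 2 + z.2 ^ 2 + 0 :=
    (sq_add_sq_pos hz).trans_eq (add_zero _).symm
  refine .of_dominated (u := fun n ↦ logKernel (1 / (n + 1)))
    (u' := fun n ↦ logKernelFDeriv (1 / (n + 1)))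
    (B := fun z ↦ ‖z‖⁻¹ + ‖z‖ ^ 2) (B' := fun z ↦ 2 * ‖z‖⁻¹) (fun n ↦ ?_)
    (hinv.add (continuous_norm.pow 2).locallyIntegrable) (fun n ↦ ?_)
    (hinv.smul (2 : ℝ)) (fun n ↦ .of_forall (norm_logKernelFDeriv_le (hε n).le)) ?_ ?_
  · rw [← funext fun z ↦ (hasFDerivAt_logKernel (hε n) z).fderiv]
    exact hasWeakFDeriv_fderiv (contDiff_logKernel (hε n))
  · filter_upwards [hne] with z hz
    exact norm_logKernel_le (hε n).le (div_le_one_of_le₀ (by simp) (by positivity)) hz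
  · filter_upwards [hne] with z hz
    exact (hlim z).sqrt.log (Real.sqrt_ne_zero'.2 (hpos hz))
  · filter_upwards [hne] with z hz
    exact ((hlim z).inv₀ (hpos hz).ne').smul_const _

end LogKernel

section Polar

lemma sq_add_sq_polarCoord_symm (z : ℝ × ℝ) :
    (polarCoord.symm z).1 ^ 2 + (polarCoord.symm z).2 ^ 2 = z.1 ^ 2 := by
  rw [polarCoord_symm_apply, mul_pow, mul_pow, ← mul_add, Real.cos_sq_add_sin_sq, mul_one]

lemma abs_fst_le_two_mul_norm_polarCoord_symm (z : ℝ × ℝ) : |z.1| ≤ 2 * ‖polarCoord.symm z‖ := by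
  refine abs_le_of_sq_le_sq ?_ (by positivity)
  calc z.1 ^ 2 = (polarCoord.symm z).1 ^ 2 + (polarCoord.symm z).2 ^ 2 :=
        (sq_add_sq_polarCoord_symm z).symm
    _ ≤ 2 * ‖polarCoord.symm z‖ ^ 2 := sq_add_sq_le_two_mul_sq_norm _
    _ ≤ (2 * ‖polarCoord.symm z‖) ^ 2 := by rw [mul_pow]; gcongr; norm_num

lemma integrableOn_polarCoord_target {F : Type*} [NormedAddCommGroup F] {f : ℝ × ℝ → F}
    (hf : Continuous f) {R : ℝ} (hR : ∀ z : ℝ × ℝ, R ≤ z.1 → f z = 0) :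
    IntegrableOn f polarCoord.target := by
  have hbox : IntegrableOn f (Set.Icc 0 R ×ˢ Set.Icc (-Real.pi) Real.pi) :=
    hf.continuousOn.integrableOn_compact (isCompact_Icc.prod isCompact_Icc)
  refine hbox.of_forall_sdiff_eq_zero polarCoord.open_target.measurableSet ?_
  rintro z ⟨⟨hpos, hangle⟩, hz⟩
  exact hR z (le_of_not_ge fun hle ↦ hz ⟨⟨hpos.le, hle⟩, Set.Ioo_subset_Icc_self hangle⟩)

variable {F : Type*} [NormedAddCommGroup F] [NormedSpace ℝ F] {h : ℝ × ℝ → F}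

lemma hasDerivAt_comp_polarCoord_symm (hh : Differentiable ℝ h) (r θ : ℝ) :
    HasDerivAt (fun r ↦ h (polarCoord.symm (r, θ)))
      (fderiv ℝ h (polarCoord.symm (r, θ)) (Real.cos θ, Real.sin θ)) r := by
  have hray : HasDerivAt (fun r ↦ polarCoord.symm (r, θ)) (Real.cos θ, Real.sin θ) r := by
    simpa using ((hasDerivAt_id r).mul_const (Real.cos θ)).prodMk
      ((hasDerivAt_id r).mul_const (Real.sin θ))
  exact (hh _).hasFDerivAt.comp_hasDerivAt r hray

lemma integral_Ioi_fderiv_polarCoord_symm [CompleteSpace F] (hh : ContDiff ℝ 1 h)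
    (hs : HasCompactSupport h) (θ : ℝ) :
    ∫ r in Set.Ioi 0, fderiv ℝ h (polarCoord.symm (r, θ)) (Real.cos θ, Real.sin θ) = -h 0 := by
  obtain ⟨R, -, hR⟩ := hs.exists_pos_le_norm
  have hray : ContDiff ℝ 1 fun r ↦ h (polarCoord.symm (r, θ)) := by
    simp only [polarCoord_symm_apply]
    fun_prop
  have hray_supp : HasCompactSupport fun r ↦ h (polarCoord.symm (r, θ)) := by
    refine .intro (isCompact_closedBall (0 : ℝ) (2 * R)) fun r hr ↦ hR _ ?_
    rw [mem_closedBall_zero_iff, Real.norm_eq_abs, not_le] at hr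
    linarith [abs_fst_le_two_mul_norm_polarCoord_symm (r, θ)]
  have hzero : polarCoord.symm (0, θ) = 0 := by simp
  rw [← hzero, ← hray_supp.integral_Ioi_deriv_eq hray 0]
  simp only [(hasDerivAt_comp_polarCoord_symm (hh.differentiable one_ne_zero) _ θ).deriv]

lemma integral_inv_sq_smul_fderiv_self_eq_polar :
    ∫ z, (z.1 ^ 2 + z.2 ^ 2)⁻¹ • fderiv ℝ h z z =
      ∫ z in polarCoord.target, fderiv ℝ h (polarCoord.symm z) (Real.cos z.2, Real.sin z.2) := by
  rw [← integral_comp_polarCoord_symm]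
  refine setIntegral_congr_fun polarCoord.open_target.measurableSet fun z hz ↦ ?_
  have hr : z.1 ≠ 0 := ne_of_gt hz.1
  have hradius : polarCoord.symm z = z.1 • (Real.cos z.2, Real.sin z.2) := rfl
  have hcancel : z.1 * (z.1 ^ 2)⁻¹ * z.1 = 1 := by field_simp
  simp only [sq_add_sq_polarCoord_symm]
  nth_rw 2 [hradius]
  rw [map_smul, smul_smul, smul_smul, hcancel, one_smul]

theorem integral_inv_sq_smul_fderiv_self [CompleteSpace F] (hh : ContDiff ℝ 1 h)
    (hs : HasCompactSupport h) :
    ∫ z, (z.1 ^ 2 + z.2 ^ 2)⁻¹ • fderiv ℝ h z z = -((2 * Real.pi) • h 0) := by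
  obtain ⟨R, -, hR⟩ := (hs.fderiv ℝ).exists_pos_le_norm
  have hint : IntegrableOn (fun z : ℝ × ℝ ↦
      fderiv ℝ h (polarCoord.symm z) (Real.cos z.2, Real.sin z.2)) polarCoord.target := by
    refine integrableOn_polarCoord_target (R := 2 * R)
      (((hh.continuous_fderiv one_ne_zero).comp continuous_polarCoord_symm).clm_apply
        (by fun_prop)) fun z hz ↦ ?_
    rw [hR _ (by linarith [le_abs_self z.1, abs_fst_le_two_mul_norm_polarCoord_symm z]),
      zero_apply]
  rw [integral_inv_sq_smul_fderiv_self_eq_polar]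
  rw [IntegrableOn, polarCoord_target, Measure.volume_eq_prod, ← Measure.prod_restrict] at hint
  rw [polarCoord_target, Measure.volume_eq_prod, ← Measure.prod_restrict,
    integral_prod_symm _ hint]
  simp only [integral_Ioi_fderiv_polarCoord_symm hh hs]
  rw [setIntegral_const, Real.volume_real_Ioo_of_le (by linarith [Real.pi_pos]), smul_neg,
    sub_neg_eq_add, two_mul]

end Polar

section Potential

variable {g : ℝ × ℝ → ℝ}

lemma logKernel_convolution_apply (g : ℝ × ℝ → ℝ) (p : ℝ × ℝ) :
    (logKernel 0 ⋆[ContinuousLinearMap.mul ℝ ℝ] g) p =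
      ∫ q, Real.log √((p.1 - q.1) ^ 2 + (p.2 - q.2) ^ 2) * g q := by
  rw [convolution_eq_swap]
  simp [logKernel]

lemma integrable_log_sqrt_mul (hg : Continuous g) (hgs : HasCompactSupport g) (p : ℝ × ℝ) :
    Integrable fun q ↦ Real.log √((p.1 - q.1) ^ 2 + (p.2 - q.2) ^ 2) * g q := by
  have h := (hgs.convolutionExists_right (ContinuousLinearMap.mul ℝ ℝ)
    hasWeakFDeriv_logKernel.locallyIntegrable hg p).integrable_swap
  simpa [logKernel] using h

theorem laplacian_logKernel_convolution (hg : ContDiff ℝ 1 g) (hgs : HasCompactSupport g)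
    (p : ℝ × ℝ) :
    fderiv ℝ (fderiv ℝ (logKernel 0 ⋆[ContinuousLinearMap.mul ℝ ℝ] g)) p (1, 0) (1, 0) +
      fderiv ℝ (fderiv ℝ (logKernel 0 ⋆[ContinuousLinearMap.mul ℝ ℝ] g)) p (0, 1) (0, 1) =
        2 * Real.pi * g p := by
  have hg_refl : ContDiff ℝ 1 fun t ↦ g (p - t) := hg.comp (contDiff_const.sub contDiff_id)
  have hg_refl_supp : HasCompactSupport fun t ↦ g (p - t) :=
    hgs.comp_homeomorph (Homeomorph.subLeft p)
  have hint (v : ℝ × ℝ) : Integrable fun t ↦ logKernelFDeriv 0 t v * fderiv ℝ g (p - t) v :=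
    integrable_apply_mul_comp_const_sub hasWeakFDeriv_logKernel.locallyIntegrable_deriv
      ((hg.continuous_fderiv one_ne_zero).clm_apply continuous_const) (hgs.fderiv_apply ℝ v) p v
  have hcoord (t : ℝ × ℝ) : fderiv ℝ g (p - t) t =
      t.1 * fderiv ℝ g (p - t) (1, 0) + t.2 * fderiv ℝ g (p - t) (0, 1) := by
    have ht : t = t.1 • (1, 0) + t.2 • (0, 1) := by simp
    conv_lhs => rw [ht, map_add, map_smul, map_smul, ← ht]
    rfl
  rw [hasWeakFDeriv_logKernel.fderiv_fderiv_convolution_apply hg hgs,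
    hasWeakFDeriv_logKernel.fderiv_fderiv_convolution_apply hg hgs,
    ← integral_add (hint _) (hint _)]
  calc ∫ t, (logKernelFDeriv 0 t (1, 0) * fderiv ℝ g (p - t) (1, 0) +
        logKernelFDeriv 0 t (0, 1) * fderiv ℝ g (p - t) (0, 1))
    _ = ∫ t, -((t.1 ^ 2 + t.2 ^ 2)⁻¹ • fderiv ℝ (fun t ↦ g (p - t)) t t) := by
      congr with t
      rw [fderiv_comp_const_sub (hg.differentiable one_ne_zero), neg_apply, hcoord]
      simp only [logKernelFDeriv_apply, smul_eq_mul]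
      ring
    _ = 2 * Real.pi * g p := by
      rw [integral_neg, integral_inv_sq_smul_fderiv_self hg_refl hg_refl_supp, neg_neg, sub_zero,
        smul_eq_mul]

end Potential

end LogPotential

open LogPotential in
theorem stmt_6_general (g : ℝ × ℝ → ℝ) (hg : ContDiff ℝ 1 g) (hsupp : HasCompactSupport g)
    (Φ : ℝ × ℝ → ℝ)
    (hΦ : ∀ p : ℝ × ℝ, Φ p = (2 * Real.pi)⁻¹ *
      ∫ q : ℝ × ℝ, Real.log (Real.sqrt ((p.1 - q.1) ^ 2 + (p.2 - q.2) ^ 2)) * g q) :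
    (∀ p : ℝ × ℝ, Integrable (fun q : ℝ × ℝ =>
        Real.log (Real.sqrt ((p.1 - q.1) ^ 2 + (p.2 - q.2) ^ 2)) * g q)) ∧
    ContDiff ℝ 2 Φ ∧
    (∀ p : ℝ × ℝ, iteratedDeriv 2 (fun x => Φ (x, p.2)) p.1 +
      iteratedDeriv 2 (fun y => Φ (p.1, y)) p.2 = g p) := by
  have hconv := hasWeakFDeriv_logKernel.contDiff_succ_convolution le_rfl hg hsupp
  rw [WithTop.coe_one, one_add_one_eq_two] at hconv
  simp only [← logKernel_convolution_apply g] at hΦ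
  obtain rfl := funext hΦ
  refine ⟨integrable_log_sqrt_mul hg.continuous hsupp, contDiff_const.mul hconv, fun p ↦ ?_⟩
  simp only [iteratedDeriv_const_mul_field]
  have hfst (x : ℝ) : HasDerivAt (fun x ↦ (x, p.2)) ((1 : ℝ), (0 : ℝ)) x :=
    (hasDerivAt_id x).prodMk (hasDerivAt_const x p.2)
  have hsnd (y : ℝ) : HasDerivAt (fun y ↦ (p.1, y)) ((0 : ℝ), (1 : ℝ)) y :=
    (hasDerivAt_const y p.1).prodMk (hasDerivAt_id y)
  rw [iteratedDeriv_two_comp_line hconv hfst, iteratedDeriv_two_comp_line hconv hsnd, ← mul_add,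
    laplacian_logKernel_convolution hg hsupp p, inv_mul_cancel_left₀ (by positivity)]

/-- The Newtonian (logarithmic) potential of a smooth compactly supported `g` solves
the 2D Poisson equation `ΔΦ = g`. -/
theorem stmt_6 (g : ℝ × ℝ → ℝ) (hg : ContDiff ℝ (⊤ : ℕ∞) g) (hsupp : HasCompactSupport g)
    (Φ : ℝ × ℝ → ℝ)
    (hΦ : ∀ p : ℝ × ℝ, Φ p = (2 * Real.pi)⁻¹ *
      ∫ q : ℝ × ℝ, Real.log (Real.sqrt ((p.1 - q.1) ^ 2 + (p.2 - q.2) ^ 2)) * g q) :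
    (∀ p : ℝ × ℝ, Integrable (fun q : ℝ × ℝ =>
        Real.log (Real.sqrt ((p.1 - q.1) ^ 2 + (p.2 - q.2) ^ 2)) * g q)) ∧
    ContDiff ℝ 2 Φ ∧
    (∀ p : ℝ × ℝ, iteratedDeriv 2 (fun x => Φ (x, p.2)) p.1 +
      iteratedDeriv 2 (fun y => Φ (p.1, y)) p.2 = g p) :=
  stmt_6_general g (hg.of_le (mod_cast le_top)) hsupp Φ hΦ
end

section
/- Let g : ℝ² → ℂ be a Schwartz function with Fourier transform ĝ. Define, for (x,y) ∈ ℝ², v(x,y) = (2π)⁻² ∫_{ℝ²} e^{i(xξ+yη)} (−iη/(ξ²+η²)) ĝ(ξ,η) d(ξ,η) and w(x,y) = (2π)⁻² ∫_{ℝ²} e^{i(xξ+yη)} (iξ/(ξ²+η²)) ĝ(ξ,η) d(ξ,η), where the integrands are extended by 0 at (ξ,η) = (0,0). Then both integrals converge absolutely, v and w are continuously differentiable on ℝ², and they satisfy ∂ₓv + ∂ᵧw = 0 and ∂ᵧv − ∂ₓw = g on ℝ². -/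
open MeasureTheory

/-! Identify the plane with `ℂ`, which unlike `ℝ × ℝ` carries the Euclidean norm. Then `v` and `w`
are the derivatives of the Newtonian potential `(-Δ)⁻¹g` in the directions `-I` and `1`. The second
derivative of `(-Δ)⁻¹g` in the directions `a`, `b` has the Fourier transform
`-(⟪a, ξ⟫⟪b, ξ⟫ / ‖ξ‖²) ĝ(ξ)`, which is symmetric in `a` and `b` and has trace `-ĝ(ξ)`. The symmetry
gives `∂ₓv + ∂ᵧw = 0`; the trace and Fourier inversion give `∂ᵧv - ∂ₓw = g`.

The symbol of `∂ᵤ(-Δ)⁻¹` is `O(‖ξ‖⁻¹)`. This is integrable at the origin in dimension at least two,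
and multiplied by `‖ξ‖` it is bounded, so integrability of `ĝ` suffices for differentiating once
under the integral. -/

open Module
open scoped FourierTransform RealInnerProductSpace

section WeakSingularity

variable {E F 𝕜 : Type*} [NormedAddCommGroup E] [MeasurableSpace E] [BorelSpace E]
  {μ : Measure E} [NormedAddCommGroup F] [NormedField 𝕜] [NormedSpace 𝕜 F]
  {f : E → F} {m : E → 𝕜} {C K s : ℝ}

lemma integrable_norm_rpow_neg_mul_norm_of_bounded [NormedSpace ℝ E] [FiniteDimensional ℝ E]
    [μ.IsAddHaarMeasure] (hs : 0 ≤ s) (hsE : s < finrank ℝ E) (hf : Integrable f μ)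
    (hC : ∀ᵐ x ∂μ, ‖f x‖ ≤ C) : Integrable (fun x => ‖x‖ ^ (-s) * ‖f x‖) μ := by
  have hmeas : AEStronglyMeasurable (fun x => ‖x‖ ^ (-s) * ‖f x‖) μ :=
    (by fun_prop : Measurable fun x : E => ‖x‖ ^ (-s)).aestronglyMeasurable.mul
      hf.norm.aestronglyMeasurable
  have hnorm (x : E) : ‖‖x‖ ^ (-s) * ‖f x‖‖ = ‖f x‖ * ‖x‖ ^ (-s) := by
    rw [Real.norm_of_nonneg (by positivity), mul_comm]
  have hnear : IntegrableOn (fun x => ‖x‖ ^ (-s) * ‖f x‖) (Metric.ball 0 1) μ := by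
    have hE : 1 ≤ finrank ℝ E := by exact_mod_cast hs.trans_lt hsE
    refine integrableOn_ball_of_norm_le_rpow (C := C) hE hsE (ae_restrict_of_ae ?_) hmeas
    filter_upwards [hC] with x hx
    rw [hnorm]
    gcongr
  have hfar : IntegrableOn (fun x => ‖x‖ ^ (-s) * ‖f x‖) (Metric.ball 0 1)ᶜ μ := by
    refine hf.norm.integrableOn.mono' hmeas.restrict
      (ae_restrict_of_forall_mem Metric.isOpen_ball.measurableSet.compl fun x hx => ?_)
    have hx : 1 ≤ ‖x‖ := by simpa using hx
    rw [hnorm]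
    exact mul_le_of_le_one_right (norm_nonneg _)
      (Real.rpow_le_one_of_one_le_of_nonpos hx (neg_nonpos.2 hs))
  exact integrableOn_univ.1 (Set.union_compl_self (Metric.ball (0 : E) 1) ▸ hnear.union hfar)

lemma integrable_smul_of_norm_le_inv_norm [NormedSpace ℝ E] [FiniteDimensional ℝ E]
    [μ.IsAddHaarMeasure] (hE : 1 < finrank ℝ E) (hm : AEStronglyMeasurable m μ)
    (hmK : ∀ x, ‖m x‖ ≤ K * ‖x‖⁻¹) (hf : Integrable f μ) (hC : ∀ᵐ x ∂μ, ‖f x‖ ≤ C) :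
    Integrable (fun x => m x • f x) μ := by
  have hsing := integrable_norm_rpow_neg_mul_norm_of_bounded zero_le_one (by exact_mod_cast hE)
    hf hC
  refine (hsing.const_mul K).mono' (hm.smul hf.aestronglyMeasurable) (.of_forall fun x => ?_)
  rw [norm_smul, Real.rpow_neg_one, ← mul_assoc]
  gcongr
  exact hmK x

lemma integrable_norm_mul_norm_smul_of_norm_le_inv_norm (hm : AEStronglyMeasurable m μ)
    (hmK : ∀ x, ‖m x‖ ≤ K * ‖x‖⁻¹) (hK : 0 ≤ K) (hf : Integrable f μ) :
    Integrable (fun x => ‖x‖ * ‖m x • f x‖) μ := by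
  refine (hf.norm.const_mul K).mono' (by fun_prop) (.of_forall fun x => ?_)
  rw [norm_mul, norm_norm, norm_norm, norm_smul]
  calc ‖x‖ * (‖m x‖ * ‖f x‖) ≤ ‖x‖ * (K * ‖x‖⁻¹ * ‖f x‖) := by
        gcongr
        exact hmK x
    _ = K * ‖f x‖ * (‖x‖ * ‖x‖⁻¹) := by ring
    _ ≤ K * ‖f x‖ := mul_le_of_le_one_right (by positivity) mul_inv_le_one

end WeakSingularity

lemma integrable_inner_mul_inner_div_smul {E F : Type*} [NormedAddCommGroup E]
    [InnerProductSpace ℝ E] [FiniteDimensional ℝ E] [MeasurableSpace E] [BorelSpace E]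
    {μ : Measure E} [NormedAddCommGroup F] [NormedSpace ℝ F] {f : E → F} (hf : Integrable f μ)
    (u v : E) : Integrable (fun ξ => (-(⟪u, ξ⟫ * ⟪v, ξ⟫ / ‖ξ‖ ^ 2)) • f ξ) μ := by
  have hmeas : Measurable fun ξ : E => -(⟪u, ξ⟫ * ⟪v, ξ⟫ / ‖ξ‖ ^ 2) := by fun_prop
  refine hf.bdd_smul (‖u‖ * ‖v‖) hmeas.aestronglyMeasurable (.of_forall fun ξ => ?_)
  rw [norm_neg, norm_div, norm_mul, norm_pow, norm_norm]
  refine div_le_of_le_mul₀ (by positivity) (by positivity) ?_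
  calc ‖⟪u, ξ⟫‖ * ‖⟪v, ξ⟫‖ ≤ (‖u‖ * ‖ξ‖) * (‖v‖ * ‖ξ‖) := by
        gcongr <;> exact norm_inner_le_norm _ _
    _ = ‖u‖ * ‖v‖ * ‖ξ‖ ^ 2 := by ring

section NewtonSymbol

variable {E : Type*} [NormedAddCommGroup E] [InnerProductSpace ℝ E]

/-- The Fourier multiplier of `∂ᵤ(-Δ)⁻¹` in the convention `𝓕 f ξ = ∫ e^{-2πi⟪x, ξ⟫} f x dx`.
It is `0` at the origin, by division by zero. -/
noncomputable def newtonSymbol (u ξ : E) : ℂ :=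
  Complex.I * ⟪u, ξ⟫ / (2 * Real.pi * ‖ξ‖ ^ 2 : ℝ)

lemma newtonSymbol_neg (u ξ : E) : newtonSymbol (-u) ξ = -newtonSymbol u ξ := by
  simp [newtonSymbol, neg_div]

lemma newtonSymbol_inv_two_pi_smul (u ξ : E) :
    newtonSymbol u ((2 * Real.pi)⁻¹ • ξ) = Complex.I * ⟪u, ξ⟫ / (‖ξ‖ ^ 2 : ℝ) := by
  have hpi : (Real.pi : ℂ) ≠ 0 := by exact_mod_cast Real.pi_ne_zero
  rw [newtonSymbol, real_inner_smul_right, norm_smul, Real.norm_of_nonneg (by positivity)]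
  push_cast
  field_simp

lemma norm_newtonSymbol_le (u ξ : E) : ‖newtonSymbol u ξ‖ ≤ ‖u‖ * ‖ξ‖⁻¹ := by
  rcases eq_or_ne ξ 0 with rfl | hξ
  · simp [newtonSymbol]
  have : 0 < ‖ξ‖ := norm_pos_iff.2 hξ
  have hpi : 1 ≤ 2 * Real.pi := by linarith [Real.pi_gt_three]
  calc ‖newtonSymbol u ξ‖ = |⟪u, ξ⟫| / (2 * Real.pi * ‖ξ‖ ^ 2) := by
        rw [newtonSymbol, norm_div, norm_mul, Complex.norm_I, one_mul, Complex.norm_real,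
          Complex.norm_real, Real.norm_eq_abs, Real.norm_of_nonneg (by positivity)]
    _ ≤ ‖u‖ * ‖ξ‖ / (1 * ‖ξ‖ ^ 2) := by
        gcongr
        exact abs_real_inner_le_norm u ξ
    _ = ‖u‖ * ‖ξ‖⁻¹ := by field_simp

lemma two_pi_I_inner_mul_newtonSymbol (u v ξ : E) :
    2 * Real.pi * Complex.I * ⟪ξ, v⟫ * newtonSymbol u ξ =
      (-(⟪u, ξ⟫ * ⟪v, ξ⟫ / ‖ξ‖ ^ 2) : ℝ) := by
  have hpi : (Real.pi : ℂ) ≠ 0 := by exact_mod_cast Real.pi_ne_zero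
  rw [newtonSymbol, real_inner_comm]
  push_cast
  field_simp
  rw [Complex.I_sq]
  ring

lemma measurable_newtonSymbol [MeasurableSpace E] [BorelSpace E] [FiniteDimensional ℝ E] (u : E) :
    Measurable (newtonSymbol u) := by
  unfold newtonSymbol
  fun_prop

end NewtonSymbol

section VectorValued

variable {E F : Type*} [NormedAddCommGroup E] [InnerProductSpace ℝ E] [FiniteDimensional ℝ E]
  [MeasurableSpace E] [BorelSpace E] [NormedAddCommGroup F] [NormedSpace ℂ F]

section InverseFourier

variable {f : E → F}

lemma contDiff_one_fourierInv (hf : Integrable f) (hf' : Integrable fun ξ => ‖ξ‖ * ‖f ξ‖) :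
    ContDiff ℝ 1 (𝓕⁻ f) := by
  refine VectorFourier.contDiff_fourierIntegral (N := 1) (-innerSL ℝ) fun n hn => ?_
  have hn : n ≤ 1 := by exact_mod_cast hn
  interval_cases n
  · simpa only [pow_zero, one_mul] using hf.norm
  · simpa only [pow_one] using hf'

lemma fderiv_fourierInv_apply (hf : Integrable f) (hf' : Integrable fun ξ => ‖ξ‖ * ‖f ξ‖)
    (x u : E) :
    fderiv ℝ (𝓕⁻ f) x u = 𝓕⁻ (fun ξ => (2 * Real.pi * Complex.I * ⟪ξ, u⟫ : ℂ) • f ξ) x := by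
  have hint : Integrable (VectorFourier.fourierSMulRight (-innerSL ℝ) f) :=
    (hf'.const_mul (2 * Real.pi * ‖-innerSL (E := E) ℝ‖)).mono'
      hf.aestronglyMeasurable.fourierSMulRight (.of_forall fun ξ =>
        (VectorFourier.norm_fourierSMulRight_le (-innerSL ℝ) f ξ).trans_eq (mul_assoc _ _ _))
  have hsymbol (ξ : E) : VectorFourier.fourierSMulRight (-innerSL ℝ) f ξ u =
      (2 * Real.pi * Complex.I * ⟪ξ, u⟫ : ℂ) • f ξ := by
    rw [VectorFourier.fourierSMulRight_apply, neg_apply, neg_apply, innerSL_apply_apply,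
      ← Complex.coe_smul, smul_smul]
    push_cast
    ring_nf
  calc fderiv ℝ (𝓕⁻ f) x u
      = VectorFourier.fourierIntegral Real.fourierChar volume (-innerSL ℝ).toLinearMap₁₂
          (VectorFourier.fourierSMulRight (-innerSL ℝ) f) x u :=
        congr($(VectorFourier.fderiv_fourierIntegral (-innerSL ℝ) hf hf') x u)
    _ = 𝓕⁻ (fun ξ => VectorFourier.fourierSMulRight (-innerSL ℝ) f ξ u) x :=
        Real.fourierIntegral_continuousLinearMap_apply' hint
    _ = 𝓕⁻ (fun ξ => (2 * Real.pi * Complex.I * ⟪ξ, u⟫ : ℂ) • f ξ) x := by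
        simp only [hsymbol]

lemma fourier_inv_two_pi_smul (g : E → F) (ξ : E) :
    𝓕 g ((2 * Real.pi)⁻¹ • ξ) = ∫ x, Complex.exp (-(Complex.I * ⟪x, ξ⟫)) • g x := by
  rw [Real.fourier_eq']
  congr with x
  have := Real.pi_ne_zero
  have h : -2 * Real.pi * ⟪x, (2 * Real.pi)⁻¹ • ξ⟫ = -⟪x, ξ⟫ := by
    rw [real_inner_smul_right]
    field_simp
  rw [h, Complex.ofReal_neg, neg_mul, mul_comm]

lemma fourierInv_eq_integral_inv_two_pi_smul (f : E → F) (x : E) :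
    𝓕⁻ f x = (((2 * Real.pi) ^ finrank ℝ E : ℝ) : ℂ)⁻¹ •
      ∫ ξ, Complex.exp (Complex.I * ⟪x, ξ⟫) • f ((2 * Real.pi)⁻¹ • ξ) := by
  have hpi : 2 * Real.pi ≠ 0 := by positivity
  have hpow : (2 * Real.pi) ^ finrank ℝ E ≠ 0 := pow_ne_zero _ hpi
  have hscale := Measure.integral_comp_smul (volume : Measure E)
    (fun η => Complex.exp (Complex.I * ⟪x, (2 * Real.pi) • η⟫) • f η) (2 * Real.pi)⁻¹
  simp only [smul_inv_smul₀ hpi] at hscale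
  rw [hscale, inv_pow, inv_inv, abs_of_pos (by positivity), ← Complex.ofReal_inv,
    Complex.coe_smul, inv_smul_smul₀ hpow, Real.fourierInv_eq']
  congr with η
  rw [real_inner_smul_right, real_inner_comm, mul_comm Complex.I]

lemma integrable_exp_inner_smul_comp_inv_two_pi_smul (hf : Integrable f) (x : E) :
    Integrable fun ξ => Complex.exp (Complex.I * ⟪x, ξ⟫) • f ((2 * Real.pi)⁻¹ • ξ) :=
  (hf.comp_smul (R := (2 * Real.pi)⁻¹) (by positivity)).bdd_smul 1
    (by fun_prop) (.of_forall fun _ => (Complex.norm_exp_I_mul_ofReal _).le)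

lemma fourierInv_sum {ι : Type*} (s : Finset ι) {f : ι → E → F}
    (hf : ∀ i ∈ s, Integrable (f i)) (x : E) :
    𝓕⁻ (fun ξ => ∑ i ∈ s, f i ξ) x = ∑ i ∈ s, 𝓕⁻ (f i) x := by
  simp only [Real.fourierInv_eq, Finset.smul_sum]
  refine integral_finsetSum s fun i hi => ?_
  simpa using (Real.fourierIntegral_convergent_iff (-x)).2 (hf i hi)

end InverseFourier

section NewtonianGradient

/-- The derivative `∂ᵤ(-Δ)⁻¹g` of the Newtonian potential of `g` in the direction `u`, given by
its Fourier integral. -/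
noncomputable def newtonDeriv (u : E) (g : E → F) : E → F :=
  𝓕⁻ fun ξ => newtonSymbol u ξ • 𝓕 g ξ

lemma norm_fourier_le_integral_norm (g : E → F) (ξ : E) : ‖𝓕 g ξ‖ ≤ ∫ x, ‖g x‖ :=
  VectorFourier.norm_fourierIntegral_le_integral_norm _ _ _ g ξ

lemma newtonDeriv_neg (u : E) (g : E → F) : newtonDeriv (-u) g = -newtonDeriv u g := by
  ext x
  simp only [newtonDeriv, newtonSymbol_neg, neg_smul, Real.fourierInv_eq, smul_neg, integral_neg,
    Pi.neg_apply]

variable {g : E → F}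

lemma integrable_newtonSymbol_smul_fourier (hE : 1 < finrank ℝ E) (hg : Integrable (𝓕 g))
    (u : E) : Integrable fun ξ => newtonSymbol u ξ • 𝓕 g ξ :=
  integrable_smul_of_norm_le_inv_norm hE (measurable_newtonSymbol u).aestronglyMeasurable
    (norm_newtonSymbol_le u) hg (.of_forall (norm_fourier_le_integral_norm g))

lemma integrable_norm_mul_norm_newtonSymbol_smul_fourier (hg : Integrable (𝓕 g)) (u : E) :
    Integrable fun ξ => ‖ξ‖ * ‖newtonSymbol u ξ • 𝓕 g ξ‖ :=
  integrable_norm_mul_norm_smul_of_norm_le_inv_norm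
    (measurable_newtonSymbol u).aestronglyMeasurable (norm_newtonSymbol_le u) (norm_nonneg u) hg

lemma contDiff_newtonDeriv (hE : 1 < finrank ℝ E) (hg : Integrable (𝓕 g)) (u : E) :
    ContDiff ℝ 1 (newtonDeriv u g) :=
  contDiff_one_fourierInv (integrable_newtonSymbol_smul_fourier hE hg u)
    (integrable_norm_mul_norm_newtonSymbol_smul_fourier hg u)

lemma fderiv_newtonDeriv_apply (hE : 1 < finrank ℝ E) (hg : Integrable (𝓕 g)) (u x v : E) :
    fderiv ℝ (newtonDeriv u g) x v =
      𝓕⁻ (fun ξ => (-(⟪u, ξ⟫ * ⟪v, ξ⟫ / ‖ξ‖ ^ 2)) • 𝓕 g ξ) x := by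
  rw [newtonDeriv, fderiv_fourierInv_apply (integrable_newtonSymbol_smul_fourier hE hg u)
    (integrable_norm_mul_norm_newtonSymbol_smul_fourier hg u)]
  simp only [← mul_smul, two_pi_I_inner_mul_newtonSymbol, Complex.coe_smul]

lemma fderiv_newtonDeriv_comm (hE : 1 < finrank ℝ E) (hg : Integrable (𝓕 g)) (u x v : E) :
    fderiv ℝ (newtonDeriv u g) x v = fderiv ℝ (newtonDeriv v g) x u := by
  simp only [fderiv_newtonDeriv_apply hE hg, mul_comm]

lemma sum_fderiv_newtonDeriv [CompleteSpace F] {ι : Type*} [Fintype ι] (b : OrthonormalBasis ι ℝ E)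
    (hE : 1 < finrank ℝ E) (hcont : Continuous g) (hg : Integrable g) (hg' : Integrable (𝓕 g))
    (x : E) : ∑ i, fderiv ℝ (newtonDeriv (b i) g) x (b i) = -g x := by
  have : Nontrivial E := nontrivial_of_finrank_pos (R := ℝ) (by lia)
  simp only [fderiv_newtonDeriv_apply hE hg']
  rw [← fourierInv_sum _ fun i _ => integrable_inner_mul_inner_div_smul hg' (b i) (b i)]
  have hsymbol : (fun ξ => ∑ i, (-(⟪b i, ξ⟫ * ⟪b i, ξ⟫ / ‖ξ‖ ^ 2)) • 𝓕 g ξ)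
      =ᵐ[volume] fun ξ => -𝓕 g ξ := by
    filter_upwards [Measure.ae_ne volume (0 : E)] with ξ hξ
    have hξ : ‖ξ‖ ^ 2 ≠ 0 := pow_ne_zero 2 (norm_ne_zero_iff.2 hξ)
    rw [← Finset.sum_smul, Finset.sum_neg_distrib, ← Finset.sum_div]
    simp only [← sq, b.sum_sq_inner_right, div_self hξ, neg_one_smul]
  calc 𝓕⁻ (fun ξ => ∑ i, (-(⟪b i, ξ⟫ * ⟪b i, ξ⟫ / ‖ξ‖ ^ 2)) • 𝓕 g ξ) x
      = 𝓕⁻ (fun ξ => -𝓕 g ξ) x := Real.fourierInv_congr_ae hsymbol x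
    _ = -𝓕⁻ (𝓕 g) x := by simp only [Real.fourierInv_eq, smul_neg, integral_neg]
    _ = -g x := by rw [hcont.fourierInv_fourier_eq hg hg']

end NewtonianGradient

section Plane

variable {g : ℝ × ℝ → F} {u : ℂ} {m : ℝ × ℝ → ℂ}

/-- The Fourier transform on the plane in coordinates, with the kernel `e^{-i⟨q, p⟩}`. -/
noncomputable def planeFourier (g : ℝ × ℝ → F) (p : ℝ × ℝ) : F :=
  ∫ q : ℝ × ℝ, Complex.exp (-(Complex.I * ((q.1 * p.1 + q.2 * p.2 : ℝ) : ℂ))) • g q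

lemma complex_inner_eq_re_mul_re_add_im_mul_im (z w : ℂ) :
    ⟪z, w⟫ = z.re * w.re + z.im * w.im := by
  rw [Complex.inner, Complex.mul_re, Complex.conj_re, Complex.conj_im]
  ring

lemma one_lt_finrank_real_complex : 1 < finrank ℝ ℂ := by
  rw [Complex.finrank_real_complex]
  exact one_lt_two

lemma fourier_comp_equivRealProdCLM (g : ℝ × ℝ → F) (p : ℝ × ℝ) :
    𝓕 (g ∘ Complex.equivRealProdCLM) ((2 * Real.pi)⁻¹ • ⟨p.1, p.2⟩) = planeFourier g p := by
  rw [fourier_inv_two_pi_smul,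
    ← Complex.volume_preserving_equiv_real_prod.symm.integral_comp']
  simp only [Complex.measurableEquivRealProd_symm_apply,
    complex_inner_eq_re_mul_re_add_im_mul_im]
  rfl

lemma integrable_comp_mk_iff {G : Type*} [NormedAddCommGroup G] {f : ℂ → G} :
    Integrable (fun p : ℝ × ℝ => f ⟨p.1, p.2⟩) ↔ Integrable f :=
  Complex.volume_preserving_equiv_real_prod.symm.integrable_comp_emb
    Complex.measurableEquivRealProd.symm.measurableEmbedding

lemma integrable_planeFourier_iff :
    Integrable (planeFourier g) ↔ Integrable (𝓕 (g ∘ Complex.equivRealProdCLM)) := by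
  have hscale : (2 * Real.pi)⁻¹ ≠ 0 := by positivity
  rw [← integrable_comp_smul_iff volume (𝓕 (g ∘ Complex.equivRealProdCLM)) hscale,
    ← integrable_comp_mk_iff]
  simp only [fourier_comp_equivRealProdCLM]

lemma integrable_planeFourier_schwartz (g : SchwartzMap (ℝ × ℝ) ℂ) :
    Integrable (planeFourier g) := by
  let G := SchwartzMap.compCLMOfContinuousLinearEquiv ℂ Complex.equivRealProdCLM g
  have hG : Integrable (𝓕 (G : ℂ → ℂ)) := by
    rw [← SchwartzMap.fourier_coe]
    exact (𝓕 G).integrable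
  exact integrable_planeFourier_iff.2 hG

/-- The integrand at `(x, y)` of the inverse Fourier transform of `m * planeFourier g`, with the
value at frequency `0` set to `0`. -/
noncomputable def multiplierIntegrand (m : ℝ × ℝ → ℂ) (g : ℝ × ℝ → F) (x y : ℝ) (p : ℝ × ℝ) : F :=
  if p = 0 then 0 else
    (Complex.exp (Complex.I * ((x * p.1 + y * p.2 : ℝ) : ℂ)) * m p) • planeFourier g p

lemma multiplierIntegrand_eq_exp_smul_newtonSymbol_smul
    (hm : ∀ p, m p = Complex.I * (u.re * p.1 + u.im * p.2 : ℝ) / (p.1 ^ 2 + p.2 ^ 2 : ℝ))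
    (x y : ℝ) (p : ℝ × ℝ) :
    multiplierIntegrand m g x y p = Complex.exp (Complex.I * ⟪(⟨x, y⟩ : ℂ), ⟨p.1, p.2⟩⟫) •
      (newtonSymbol u ((2 * Real.pi)⁻¹ • ⟨p.1, p.2⟩) •
        𝓕 (g ∘ Complex.equivRealProdCLM) ((2 * Real.pi)⁻¹ • ⟨p.1, p.2⟩)) := by
  have hnorm : ‖(⟨p.1, p.2⟩ : ℂ)‖ ^ 2 = p.1 ^ 2 + p.2 ^ 2 := by
    rw [Complex.sq_norm, Complex.normSq_mk, sq, sq]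
  rw [newtonSymbol_inv_two_pi_smul, fourier_comp_equivRealProdCLM, hnorm, smul_smul]
  simp only [complex_inner_eq_re_mul_re_add_im_mul_im, ← hm p]
  -- `m 0 = 0` by division by zero, so the case distinction at the origin changes nothing.
  refine ite_eq_right_iff.2 fun hp => ?_
  simp [hm, hp]

lemma integrable_multiplierIntegrand (hg : Integrable (planeFourier g))
    (hm : ∀ p, m p = Complex.I * (u.re * p.1 + u.im * p.2 : ℝ) / (p.1 ^ 2 + p.2 ^ 2 : ℝ))
    (x y : ℝ) : Integrable (multiplierIntegrand m g x y) := by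
  have hsymbol := integrable_newtonSymbol_smul_fourier one_lt_finrank_real_complex
    (integrable_planeFourier_iff.1 hg) u
  simpa only [← multiplierIntegrand_eq_exp_smul_newtonSymbol_smul hm] using
    integrable_comp_mk_iff.2 (integrable_exp_inner_smul_comp_inv_two_pi_smul hsymbol ⟨x, y⟩)

lemma integral_multiplierIntegrand
    (hm : ∀ p, m p = Complex.I * (u.re * p.1 + u.im * p.2 : ℝ) / (p.1 ^ 2 + p.2 ^ 2 : ℝ))
    (x y : ℝ) :
    (((2 * Real.pi) ^ 2 : ℝ) : ℂ)⁻¹ • ∫ p, multiplierIntegrand m g x y p =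
      newtonDeriv u (g ∘ Complex.equivRealProdCLM) ⟨x, y⟩ := by
  rw [newtonDeriv, fourierInv_eq_integral_inv_two_pi_smul, Complex.finrank_real_complex,
    ← Complex.volume_preserving_equiv_real_prod.symm.integral_comp']
  simp only [multiplierIntegrand_eq_exp_smul_newtonSymbol_smul hm,
    Complex.measurableEquivRealProd_symm_apply]

lemma deriv_comp_mk_fst {U : ℂ → F} (hU : Differentiable ℝ U) (x y : ℝ) :
    deriv (fun t => U ⟨t, y⟩) x = fderiv ℝ U ⟨x, y⟩ 1 := by
  have hline : HasDerivAt (fun t : ℝ => (⟨t, y⟩ : ℂ)) 1 x :=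
    Complex.equivRealProdCLM.symm.hasFDerivAt.comp_hasDerivAt x
      ((hasDerivAt_id x).prodMk (hasDerivAt_const x y))
  exact ((hU _).hasFDerivAt.comp_hasDerivAt x hline).deriv

lemma deriv_comp_mk_snd {U : ℂ → F} (hU : Differentiable ℝ U) (x y : ℝ) :
    deriv (fun t => U ⟨x, t⟩) y = fderiv ℝ U ⟨x, y⟩ Complex.I := by
  have hline : HasDerivAt (fun t : ℝ => (⟨x, t⟩ : ℂ)) Complex.I y :=
    Complex.equivRealProdCLM.symm.hasFDerivAt.comp_hasDerivAt y
      ((hasDerivAt_const y x).prodMk (hasDerivAt_id y))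
  exact ((hU _).hasFDerivAt.comp_hasDerivAt y hline).deriv

lemma fderiv_newtonDeriv_one_add_fderiv_newtonDeriv_I [CompleteSpace F] {f : ℂ → F}
    (hcont : Continuous f) (hf : Integrable f) (hf' : Integrable (𝓕 f)) (z : ℂ) :
    fderiv ℝ (newtonDeriv 1 f) z 1 + fderiv ℝ (newtonDeriv Complex.I f) z Complex.I = -f z := by
  simpa [Fin.sum_univ_two] using sum_fderiv_newtonDeriv Complex.orthonormalBasisOneI
    one_lt_finrank_real_complex hcont hf hf' z

end Plane

end VectorValued

theorem stmt_7_general {F : Type*} [NormedAddCommGroup F] [NormedSpace ℂ F] [CompleteSpace F]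
    (g : ℝ × ℝ → F) (hg_cont : Continuous g) (hg : Integrable g) (ghat : ℝ × ℝ → F)
    (hghat : ∀ p : ℝ × ℝ, ghat p =
      ∫ q : ℝ × ℝ, Complex.exp (-(Complex.I * ((q.1 * p.1 + q.2 * p.2 : ℝ) : ℂ))) • g q)
    (hghat_int : Integrable ghat) (v w : ℝ × ℝ → F)
    (hv : ∀ x y : ℝ, v (x, y) = (((2 * Real.pi) ^ 2 : ℝ) : ℂ)⁻¹ •
      ∫ p : ℝ × ℝ, if p = 0 then 0 else
        (Complex.exp (Complex.I * ((x * p.1 + y * p.2 : ℝ) : ℂ)) *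
          (-(Complex.I) * ((p.2 : ℝ) : ℂ) / (((p.1 ^ 2 + p.2 ^ 2 : ℝ)) : ℂ))) • ghat p)
    (hw : ∀ x y : ℝ, w (x, y) = (((2 * Real.pi) ^ 2 : ℝ) : ℂ)⁻¹ •
      ∫ p : ℝ × ℝ, if p = 0 then 0 else
        (Complex.exp (Complex.I * ((x * p.1 + y * p.2 : ℝ) : ℂ)) *
          (Complex.I * ((p.1 : ℝ) : ℂ) / (((p.1 ^ 2 + p.2 ^ 2 : ℝ)) : ℂ))) • ghat p) :
    (∀ x y : ℝ, Integrable (fun p : ℝ × ℝ => if p = 0 then 0 else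
        (Complex.exp (Complex.I * ((x * p.1 + y * p.2 : ℝ) : ℂ)) *
          (-(Complex.I) * ((p.2 : ℝ) : ℂ) / (((p.1 ^ 2 + p.2 ^ 2 : ℝ)) : ℂ))) • ghat p)) ∧
    (∀ x y : ℝ, Integrable (fun p : ℝ × ℝ => if p = 0 then 0 else
        (Complex.exp (Complex.I * ((x * p.1 + y * p.2 : ℝ) : ℂ)) *
          (Complex.I * ((p.1 : ℝ) : ℂ) / (((p.1 ^ 2 + p.2 ^ 2 : ℝ)) : ℂ))) • ghat p)) ∧
    ContDiff ℝ 1 v ∧ ContDiff ℝ 1 w ∧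
    (∀ x y : ℝ, deriv (fun x' => v (x', y)) x + deriv (fun y' => w (x, y')) y = 0) ∧
    (∀ x y : ℝ, deriv (fun y' => v (x, y')) y - deriv (fun x' => w (x', y)) x = g (x, y)) := by
  obtain rfl : ghat = planeFourier g := funext hghat
  set G : ℂ → F := g ∘ Complex.equivRealProdCLM
  have hG_cont : Continuous G := hg_cont.comp Complex.equivRealProdCLM.continuous
  have hG : Integrable G := integrable_comp_mk_iff.1 hg
  have hG_hat : Integrable (𝓕 G) := integrable_planeFourier_iff.1 hghat_int
  have hC1 (u : ℂ) : ContDiff ℝ 1 (newtonDeriv u G) :=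
    contDiff_newtonDeriv one_lt_finrank_real_complex hG_hat u
  have hdiff (u : ℂ) : Differentiable ℝ (newtonDeriv u G) := (hC1 u).differentiable one_ne_zero
  have hm_v (p : ℝ × ℝ) : -Complex.I * p.2 / (p.1 ^ 2 + p.2 ^ 2 : ℝ) =
      Complex.I * ((-Complex.I).re * p.1 + (-Complex.I).im * p.2 : ℝ) /
        (p.1 ^ 2 + p.2 ^ 2 : ℝ) := by simp
  have hm_w (p : ℝ × ℝ) : Complex.I * p.1 / (p.1 ^ 2 + p.2 ^ 2 : ℝ) =
      Complex.I * ((1 : ℂ).re * p.1 + (1 : ℂ).im * p.2 : ℝ) / (p.1 ^ 2 + p.2 ^ 2 : ℝ) := by simp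
  obtain rfl : v = fun p => newtonDeriv (-Complex.I) G ⟨p.1, p.2⟩ :=
    funext fun p => (hv p.1 p.2).trans (integral_multiplierIntegrand hm_v p.1 p.2)
  obtain rfl : w = fun p => newtonDeriv 1 G ⟨p.1, p.2⟩ :=
    funext fun p => (hw p.1 p.2).trans (integral_multiplierIntegrand hm_w p.1 p.2)
  refine ⟨integrable_multiplierIntegrand hghat_int hm_v,
    integrable_multiplierIntegrand hghat_int hm_w,
    (hC1 _).comp Complex.equivRealProdCLM.symm.contDiff,
    (hC1 _).comp Complex.equivRealProdCLM.symm.contDiff, fun x y => ?_, fun x y => ?_⟩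
  · rw [deriv_comp_mk_fst (hdiff _), deriv_comp_mk_snd (hdiff _), newtonDeriv_neg, fderiv_neg,
      fderiv_newtonDeriv_comm one_lt_finrank_real_complex hG_hat 1]
    exact neg_add_cancel _
  · have hdiv := fderiv_newtonDeriv_one_add_fderiv_newtonDeriv_I hG_cont hG hG_hat ⟨x, y⟩
    rw [deriv_comp_mk_fst (hdiff _), deriv_comp_mk_snd (hdiff _), newtonDeriv_neg, fderiv_neg,
      neg_apply, ← neg_add', add_comm, hdiv, neg_neg]
    rfl

/-- The Fourier-space Helmholtz source potentials `v̂ = −iη ĝ/(ξ²+η²)`,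
`ŵ = iξ ĝ/(ξ²+η²)` define C¹ functions `v`, `w` with `∂ₓv + ∂ᵧw = 0` and
`∂ᵧv − ∂ₓw = g`. -/
theorem stmt_7 (g : SchwartzMap (ℝ × ℝ) ℂ)
    (ghat : ℝ × ℝ → ℂ)
    (hghat : ∀ p : ℝ × ℝ, ghat p =
      ∫ q : ℝ × ℝ, Complex.exp (-(Complex.I * ((q.1 * p.1 + q.2 * p.2 : ℝ) : ℂ))) * g q)
    (v w : ℝ × ℝ → ℂ)
    (hv : ∀ x y : ℝ, v (x, y) = (((2 * Real.pi) ^ 2 : ℝ) : ℂ)⁻¹ *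
      ∫ p : ℝ × ℝ, if p = 0 then 0 else
        Complex.exp (Complex.I * ((x * p.1 + y * p.2 : ℝ) : ℂ)) *
          (-(Complex.I) * ((p.2 : ℝ) : ℂ) / (((p.1 ^ 2 + p.2 ^ 2 : ℝ)) : ℂ)) * ghat p)
    (hw : ∀ x y : ℝ, w (x, y) = (((2 * Real.pi) ^ 2 : ℝ) : ℂ)⁻¹ *
      ∫ p : ℝ × ℝ, if p = 0 then 0 else
        Complex.exp (Complex.I * ((x * p.1 + y * p.2 : ℝ) : ℂ)) *
          (Complex.I * ((p.1 : ℝ) : ℂ) / (((p.1 ^ 2 + p.2 ^ 2 : ℝ)) : ℂ)) * ghat p) :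
    (∀ x y : ℝ, Integrable (fun p : ℝ × ℝ => if p = 0 then 0 else
        Complex.exp (Complex.I * ((x * p.1 + y * p.2 : ℝ) : ℂ)) *
          (-(Complex.I) * ((p.2 : ℝ) : ℂ) / (((p.1 ^ 2 + p.2 ^ 2 : ℝ)) : ℂ)) * ghat p)) ∧
    (∀ x y : ℝ, Integrable (fun p : ℝ × ℝ => if p = 0 then 0 else
        Complex.exp (Complex.I * ((x * p.1 + y * p.2 : ℝ) : ℂ)) *
          (Complex.I * ((p.1 : ℝ) : ℂ) / (((p.1 ^ 2 + p.2 ^ 2 : ℝ)) : ℂ)) * ghat p)) ∧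
    ContDiff ℝ 1 v ∧ ContDiff ℝ 1 w ∧
    (∀ x y : ℝ, deriv (fun x' => v (x', y)) x + deriv (fun y' => w (x, y')) y = 0) ∧
    (∀ x y : ℝ, deriv (fun y' => v (x, y')) y - deriv (fun x' => w (x', y)) x = g (x, y)) := by
  obtain rfl : ghat = planeFourier g := funext hghat
  simpa only [smul_eq_mul] using stmt_7_general g g.continuous g.integrable _ hghat
    (integrable_planeFourier_schwartz g) v w hv hw
end
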